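/- arXiv:2602.23838 — 3 statements merged into one kernel-verified Lean document; each statement's English description precedes it below -/
import Mathlib

section
/- Assume the explicit abc conjecture: for all pairwise coprime positive integers a, b, c with a + b = c one has c < rad(a·b·c)^{7/4}. Fix integers 2 ≤ s < t, distinct indices i₂,…,i_s ∈ {2,…,t}, and a positive integer c₀. Then there are only finitely many tuples (a₁,…,a_t, n₁,…,n_s) of positive integers satisfying: a₁ ≥ a₂ ≥ ⋯ ≥ a_t ≥ 2, n₁ ≥ n₂ ≥ ⋯ ≥ n_s ≥ 2, ∏_{l=1}^{t} a_l! = ∏_{j=1}^{s} n_j!, |a_l − n_j| ≥ 2 for all 1 ≤ l ≤ t and 1 ≤ j ≤ s, n₁ > a₁, n_j > a_{i_j} for each j = 2,…,s, and max{n₂ − a_{i₂}, …, n_s − a_{i_s}} ≤ c₀·(n₁ − a₁). -/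
/-- The radical of a natural number: the product of its distinct prime factors. -/
def rad (n : ℕ) : ℕ := n.primeFactors.prod id

/-- The explicit abc conjecture (Baker / Laishram–Shorey form): for pairwise coprime
positive integers `a`, `b`, `c` with `a + b = c` one has `c < rad (a*b*c) ^ (7/4)`. -/
def ExplicitABC : Prop :=
  ∀ a b c : ℕ, 0 < a → 0 < b → 0 < c →
    Nat.Coprime a b → Nat.Coprime a c → Nat.Coprime b c → a + b = c →
    (c : ℝ) < (rad (a * b * c) : ℝ) ^ ((7 : ℝ) / 4)

/-!
Let `N` be the largest `n j`, let `k` be its gap to the largest `a l`, and let `M` be the largest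
unpaired `a l`. Cancelling the paired factorials turns the equation into
`∏ a! = ∏ n (n - 1) ⋯ (n - d + 1)`, where `a` runs over the unpaired arguments, `n` over all
arguments on the right-hand side, and `d` is the gap at `n`. Hence the `k` integers in `(N - k, N]`
only have prime factors up to `M ≤ N - k`, and none of them is prime.

Comparing powers of `2` and logarithms gives `M ≪ k + log N`, `M log M - M ≪ k log N ≪ M log M` and
`k (log N - log k) ≪ k + log N + log N log M`, and the abc conjecture, applied to two consecutive
integers in `(N - k, N]` whose product has small radical, gives `log N ≪ M / k + k`.

* If `k ≤ (log N)²`, then `log M ≪ log log N`, so `k log N ≪ (k + log N) log log N` and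
  `k ≪ log log N`. Now the abc bound reads `k log N ≪ M`, which together with
  `M log M - M ≪ k log N` bounds `M`, and therefore `N`.
* Otherwise `k ≫ N`, and `(N - k, N]` contains a prime as soon as `N` is large.

The primes of the second case come from the non-vanishing of `ζ` on the line `Re s = 1`, by the
Wiener–Ikehara argument with the Fejér kernel.
-/

open Real Filter Topology
open Complex (I)
open scoped ArithmeticFunction.vonMangoldt Nat

/-- The Fejér kernel of bandwidth `T`: the Fourier transform of the tent `t ↦ 1 - |t| / T` supported
on `[-T, T]`. It is given in closed form, which is also valid at `v = 0`. -/
noncomputable def fejerKernel (T v : ℝ) : ℝ := T * sinc (T * v / 2) ^ 2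

section FejerKernel

variable {T : ℝ}

lemma integral_one_sub_div_mul_cos (hT : 0 < T) (v : ℝ) :
    ∫ t in (0 : ℝ)..T, (1 - t / T) * cos (t * v) = fejerKernel T v / 2 := by
  rcases eq_or_ne v 0 with rfl | hv
  · have hint : IntervalIntegrable (fun t : ℝ ↦ t / T) MeasureTheory.volume 0 T :=
      Continuous.intervalIntegrable (by fun_prop) _ _
    simp only [mul_zero, cos_zero, mul_one, fejerKernel, zero_div, sinc_zero, one_pow]
    rw [intervalIntegral.integral_sub (by simp) hint, intervalIntegral.integral_div, integral_id,
      intervalIntegral.integral_const]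
    simp only [smul_eq_mul]
    field_simp
    ring
  have hderiv (t : ℝ) : HasDerivAt
      (fun t ↦ (1 - t / T) * (sin (t * v) / v) - cos (t * v) / (T * v ^ 2))
      ((1 - t / T) * cos (t * v)) t := by
    have hlin : HasDerivAt (fun t : ℝ ↦ t * v) v t := by simpa using (hasDerivAt_id t).mul_const v
    have htent : HasDerivAt (fun t : ℝ ↦ 1 - t / T) (-(1 / T)) t := by
      simpa using ((hasDerivAt_id t).div_const T).const_sub 1
    refine ((htent.mul (hlin.sin.div_const v)).sub
      (hlin.cos.div_const (T * v ^ 2))).congr_deriv ?_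
    field_simp
    ring
  have hcos : cos (T * v) = 1 - 2 * sin (T * v / 2) ^ 2 := by
    rw [← cos_two_mul_eq_one_sub]
    ring_nf
  rw [intervalIntegral.integral_eq_sub_of_hasDerivAt (fun t _ ↦ hderiv t)
    (Continuous.intervalIntegrable (by fun_prop) _ _), fejerKernel, sinc_of_ne_zero (by positivity),
    hcos]
  simp only [zero_mul, cos_zero, sin_zero]
  field_simp
  ring

lemma integral_tent_mul_exp (hT : 0 < T) (v : ℝ) :
    ∫ t in -T..T, ((1 - |t| / T : ℝ) : ℂ) * Complex.exp (t * v * I) = fejerKernel T v := by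
  have hint (a b : ℝ) : IntervalIntegrable
      (fun t : ℝ ↦ ((1 - |t| / T : ℝ) : ℂ) * Complex.exp (t * v * I)) MeasureTheory.volume a b :=
    Continuous.intervalIntegrable (by fun_prop) _ _
  have hneg : ∫ t in -T..0, ((1 - |t| / T : ℝ) : ℂ) * Complex.exp (t * v * I) =
      ∫ t in (0 : ℝ)..T, ((1 - |t| / T : ℝ) : ℂ) * Complex.exp (-(t * v * I)) := by
    rw [← neg_zero, ← intervalIntegral.integral_comp_neg]
    simp
  have hsum (t : ℝ) (ht : t ∈ Set.uIcc 0 T) :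
      ((1 - |t| / T : ℝ) : ℂ) * Complex.exp (-(t * v * I)) +
        ((1 - |t| / T : ℝ) : ℂ) * Complex.exp (t * v * I) =
      ((2 * ((1 - t / T) * cos (t * v)) : ℝ) : ℂ) := by
    rw [Set.uIcc_of_le hT.le] at ht
    rw [abs_of_nonneg ht.1, ← mul_add, add_comm (Complex.exp _)]
    push_cast
    rw [← neg_mul, ← Complex.two_cos]
    ring
  rw [← intervalIntegral.integral_add_adjacent_intervals (hint _ 0) (hint 0 _), hneg,
    ← intervalIntegral.integral_add (Continuous.intervalIntegrable (by fun_prop) _ _) (hint _ _),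
    intervalIntegral.integral_congr hsum, intervalIntegral.integral_ofReal,
    intervalIntegral.integral_const_mul, integral_one_sub_div_mul_cos hT]
  ring_nf

lemma fejerKernel_nonneg (hT : 0 ≤ T) (v : ℝ) : 0 ≤ fejerKernel T v :=
  mul_nonneg hT (sq_nonneg _)

lemma fejerKernel_le (hT : 0 ≤ T) (v : ℝ) : fejerKernel T v ≤ T :=
  mul_le_of_le_one_right hT ((sq_le_one_iff_abs_le_one _).mpr (abs_sinc_le_one _))

lemma fejerKernel_mul_sq_le (hT : 0 < T) (v : ℝ) : fejerKernel T v * v ^ 2 ≤ 4 / T := by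
  rcases eq_or_ne v 0 with rfl | hv
  · simp only [ne_eq, OfNat.ofNat_ne_zero, not_false_eq_true, zero_pow, mul_zero]
    positivity
  have hsin := sin_sq_le_one (T * v / 2)
  calc fejerKernel T v * v ^ 2 = 4 / T * sin (T * v / 2) ^ 2 := by
        rw [fejerKernel, sinc_of_ne_zero (by positivity)]
        field_simp
        ring
    _ ≤ 4 / T := mul_le_of_le_one_right (by positivity) hsin

lemma fejerKernel_le_div_one_add_sq (hT : 0 < T) (v : ℝ) :
    fejerKernel T v ≤ (T + 4 / T) * (1 + v ^ 2)⁻¹ := by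
  rw [← div_eq_mul_inv, le_div_iff₀ (by positivity), mul_add, mul_one]
  exact add_le_add (fejerKernel_le hT.le v) (fejerKernel_mul_sq_le hT v)

lemma fejerKernel_le_of_le_abs (hT : 0 < T) {η v : ℝ} (hη : 0 < η) (hv : η ≤ |v|) :
    fejerKernel T v ≤ 4 * (1 + 1 / η ^ 2) / T * (1 + v ^ 2)⁻¹ := by
  have hηv : η ^ 2 ≤ v ^ 2 := by
    rw [← sq_abs v]
    gcongr
  have hone : 1 + v ^ 2 ≤ (1 + 1 / η ^ 2) * v ^ 2 := by
    have : 1 ≤ 1 / η ^ 2 * v ^ 2 := by rwa [one_div, inv_mul_eq_div, one_le_div (by positivity)]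
    linarith
  rw [← div_eq_mul_inv, le_div_iff₀ (by positivity)]
  calc fejerKernel T v * (1 + v ^ 2) ≤ fejerKernel T v * ((1 + 1 / η ^ 2) * v ^ 2) :=
        mul_le_mul_of_nonneg_left hone (fejerKernel_nonneg hT.le v)
    _ = (1 + 1 / η ^ 2) * (fejerKernel T v * v ^ 2) := by ring
    _ ≤ (1 + 1 / η ^ 2) * (4 / T) := by gcongr; exact fejerKernel_mul_sq_le hT v
    _ = 4 * (1 + 1 / η ^ 2) / T := by ring

lemma div_four_le_fejerKernel (hT : 0 < T) {v : ℝ} (hv₀ : 0 ≤ v) (hv : v ≤ 1 / T) :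
    T / 4 ≤ fejerKernel T v := by
  have hTv : T * v ≤ 1 := by rwa [le_div_iff₀' hT] at hv
  have hx₀ : 0 ≤ T * v / 2 := by positivity
  have hsinc : 1 / 2 ≤ sinc (T * v / 2) := by
    rcases eq_or_lt_of_le hx₀ with hx | hx
    · rw [← hx, sinc_zero]
      norm_num
    · rw [sinc_of_ne_zero hx.ne', le_div_iff₀ hx]
      calc 1 / 2 * (T * v / 2) ≤ 2 / π * (T * v / 2) := by
            gcongr ?_ * _
            rw [div_le_div_iff₀ two_pos pi_pos]
            linarith [pi_le_four]
        _ ≤ sin (T * v / 2) := mul_le_sin hx₀ (by linarith [pi_gt_three])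
  have hsq : (1 / 2 : ℝ) ^ 2 ≤ sinc (T * v / 2) ^ 2 := by gcongr
  rw [fejerKernel]
  nlinarith

end FejerKernel

section ChebyshevBound

lemma summable_inv_one_add_int_sq : Summable fun m : ℤ ↦ (1 + (m : ℝ) ^ 2)⁻¹ := by
  refine ((summable_one_div_int_pow (p := 2)).mpr one_lt_two).of_norm_bounded_eventually ?_
  filter_upwards [Set.Finite.compl_mem_cofinite (Set.finite_singleton (0 : ℤ))] with m hm
  have hm₀ : (m : ℝ) ≠ 0 := by simpa using hm
  rw [norm_of_nonneg (by positivity), one_div]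
  gcongr
  linarith

variable {w : ℕ → ℝ} {B : ℝ}

lemma sum_div_le_of_log_mem_Ico (hw : ∀ n, 0 ≤ w n)
    (hB : ∀ N : ℕ, ∑ n ∈ Finset.Ioc 0 N, w n ≤ B * N) (x : ℝ) (F : Finset ℕ)
    (hF : ∀ n ∈ F, log n ∈ Set.Ico x (x + 1)) : ∑ n ∈ F, w n / n ≤ B * exp 1 := by
  have hB₀ : 0 ≤ B := by simpa using (hw 1).trans (by simpa using hB 1)
  have hpos {n : ℕ} (hn : n ∈ F.erase 0) : (0 : ℝ) < n := by
    exact_mod_cast Nat.pos_of_ne_zero (Finset.ne_of_mem_erase hn)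
  have hsub : F.erase 0 ⊆ Finset.Ioc 0 ⌊exp (x + 1)⌋₊ := fun n hn ↦ by
    have hlog := (hF n (Finset.mem_of_mem_erase hn)).2
    exact Finset.mem_Ioc.mpr ⟨by exact_mod_cast hpos hn,
      Nat.le_floor ((log_lt_iff_lt_exp (hpos hn)).mp hlog).le⟩
  calc ∑ n ∈ F, w n / n = ∑ n ∈ F.erase 0, w n / n := (Finset.sum_erase F (by simp)).symm
    _ ≤ ∑ n ∈ F.erase 0, w n / exp x := Finset.sum_le_sum fun n hn ↦
        div_le_div_of_nonneg_left (hw n) (exp_pos x) <|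
          (le_log_iff_exp_le (hpos hn)).mp (hF n (Finset.mem_of_mem_erase hn)).1
    _ = (∑ n ∈ F.erase 0, w n) / exp x := (Finset.sum_div ..).symm
    _ ≤ B * exp (x + 1) / exp x := by
        gcongr
        calc ∑ n ∈ F.erase 0, w n ≤ ∑ n ∈ Finset.Ioc 0 ⌊exp (x + 1)⌋₊, w n :=
              Finset.sum_le_sum_of_subset_of_nonneg hsub fun n _ _ ↦ hw n
          _ ≤ B * ⌊exp (x + 1)⌋₊ := hB _
          _ ≤ B * exp (x + 1) := by gcongr; exact Nat.floor_le (exp_pos _).le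
    _ = B * exp 1 := by rw [mul_div_assoc, ← exp_sub, add_sub_cancel_left]

lemma exists_sum_div_mul_inv_one_add_sq_le (hw : ∀ n, 0 ≤ w n)
    (hB : ∀ N : ℕ, ∑ n ∈ Finset.Ioc 0 N, w n ≤ B * N) :
    ∃ A, 0 ≤ A ∧ ∀ (u : ℝ) (F : Finset ℕ),
      ∑ n ∈ F, w n / n * (1 + (log n - u) ^ 2)⁻¹ ≤ A := by
  have hB₀ : 0 ≤ B := by simpa using (hw 1).trans (by simpa using hB 1)
  have hfloor (v : ℝ) : (1 + v ^ 2)⁻¹ ≤ 3 * (1 + (⌊v⌋ : ℝ) ^ 2)⁻¹ := by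
    rw [← div_eq_mul_inv, le_div_iff₀ (by positivity), inv_mul_le_iff₀ (by positivity)]
    nlinarith [Int.floor_le v, Int.lt_floor_add_one v, sq_nonneg (2 * v - ⌊v⌋)]
  refine ⟨3 * (B * exp 1 * ∑' m : ℤ, (1 + (m : ℝ) ^ 2)⁻¹),
    mul_nonneg three_pos.le <| mul_nonneg (by positivity) <| tsum_nonneg fun m ↦ by positivity,
    fun u F ↦ ?_⟩
  let block (n : ℕ) : ℤ := ⌊log n - u⌋
  have hblock (m : ℤ) : ∑ n ∈ F with block n = m, w n / n * (1 + (block n : ℝ) ^ 2)⁻¹ ≤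
      B * exp 1 * (1 + (m : ℝ) ^ 2)⁻¹ := by
    calc ∑ n ∈ F with block n = m, w n / n * (1 + (block n : ℝ) ^ 2)⁻¹
        = (∑ n ∈ F with block n = m, w n / n) * (1 + (m : ℝ) ^ 2)⁻¹ := by
          rw [Finset.sum_mul]
          exact Finset.sum_congr rfl fun n hn ↦ by rw [(Finset.mem_filter.mp hn).2]
      _ ≤ B * exp 1 * (1 + (m : ℝ) ^ 2)⁻¹ := by
          gcongr
          refine sum_div_le_of_log_mem_Ico hw hB (u + m) _ fun n hn ↦ ?_
          have hnm := Int.floor_eq_iff.mp (Finset.mem_filter.mp hn).2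
          exact ⟨by linarith, by linarith⟩
  calc ∑ n ∈ F, w n / n * (1 + (log n - u) ^ 2)⁻¹
      ≤ ∑ n ∈ F, 3 * (w n / n * (1 + (block n : ℝ) ^ 2)⁻¹) := Finset.sum_le_sum fun n _ ↦ by
        rw [mul_left_comm]
        exact mul_le_mul_of_nonneg_left (hfloor _) (div_nonneg (hw n) n.cast_nonneg)
    _ = 3 * ∑ m ∈ F.image block,
          ∑ n ∈ F with block n = m, w n / n * (1 + (block n : ℝ) ^ 2)⁻¹ := by
        rw [← Finset.mul_sum,
          Finset.sum_fiberwise_of_maps_to fun n hn ↦ Finset.mem_image_of_mem _ hn]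
    _ ≤ 3 * ∑ m ∈ F.image block, B * exp 1 * (1 + (m : ℝ) ^ 2)⁻¹ := by
        gcongr with m
        exact hblock m
    _ ≤ 3 * (B * exp 1 * ∑' m : ℤ, (1 + (m : ℝ) ^ 2)⁻¹) := by
        rw [← Finset.mul_sum]
        gcongr
        exact summable_inv_one_add_int_sq.sum_le_tsum _ fun m _ ↦ by positivity

lemma summable_div_mul_fejerKernel (hw : ∀ n, 0 ≤ w n)
    (hB : ∀ N : ℕ, ∑ n ∈ Finset.Ioc 0 N, w n ≤ B * N) {T : ℝ} (hT : 0 < T) (u : ℝ) :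
    Summable fun n : ℕ ↦ w n / n * fejerKernel T (log n - u) := by
  obtain ⟨A, -, hA⟩ := exists_sum_div_mul_inv_one_add_sq_le hw hB
  have hwn (n : ℕ) : 0 ≤ w n / n := div_nonneg (hw n) n.cast_nonneg
  have hdecay : Summable fun n : ℕ ↦ w n / n * (1 + (log n - u) ^ 2)⁻¹ :=
    summable_of_sum_le (fun n ↦ mul_nonneg (hwn n) (by positivity)) (hA u)
  refine (hdecay.mul_left (T + 4 / T)).of_nonneg_of_le
    (fun n ↦ mul_nonneg (hwn n) (fejerKernel_nonneg hT.le _)) fun n ↦ ?_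
  rw [mul_left_comm]
  exact mul_le_mul_of_nonneg_left (fejerKernel_le_div_one_add_sq hT _) (hwn n)

end ChebyshevBound

section FejerTransform

/-- The integral of the boundary values `t ↦ H (σ - t I)` against the tent `t ↦ 1 - |t| / T` and the
character `t ↦ exp (-t u I)`. When `H` is a Dirichlet series this is its term-by-term smoothing by
the Fejér kernel around `log n = u`. -/
noncomputable def fejerTransform (H : ℂ → ℂ) (T σ u : ℝ) : ℂ :=
  ∫ t in -T..T, ((1 - |t| / T : ℝ) : ℂ) * (Complex.exp (-(t * u * I)) * H (σ - t * I))

variable {T : ℝ}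

lemma term_sub_mul_I (f : ℕ → ℂ) (s : ℂ) (t : ℝ) (n : ℕ) :
    LSeries.term f (s - t * I) n = LSeries.term f s n * Complex.exp (t * log n * I) := by
  rcases eq_or_ne n 0 with rfl | hn
  · simp
  have hn' : (n : ℂ) ≠ 0 := Nat.cast_ne_zero.mpr hn
  rw [LSeries.term_of_ne_zero hn, LSeries.term_of_ne_zero hn, Complex.cpow_sub _ _ hn',
    Complex.cpow_def_of_ne_zero hn' (t * I), Complex.natCast_log, div_div_eq_mul_div,
    mul_div_right_comm, mul_left_comm, mul_assoc]

lemma hasSum_term_mul_fejerKernel {f : ℕ → ℂ} {σ : ℝ} (hT : 0 < T) (hf : LSeriesSummable f σ)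
    (u : ℝ) : HasSum (fun n ↦ LSeries.term f σ n * fejerKernel T (log n - u))
      (fejerTransform (LSeries f) T σ u) := by
  have hterm (n : ℕ) (t : ℝ) : Complex.exp (-(t * u * I)) * LSeries.term f (σ - t * I) n =
      LSeries.term f σ n * Complex.exp (t * (log n - u : ℝ) * I) := by
    rw [term_sub_mul_I, mul_left_comm, ← Complex.exp_add]
    push_cast
    ring_nf
  have hnorm (n : ℕ) (t : ℝ) : ‖Complex.exp (t * (log n - u : ℝ) * I)‖ = 1 := by
    rw [← Complex.ofReal_mul, Complex.norm_exp_ofReal_mul_I]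
  have htent {t : ℝ} (ht : t ∈ Set.uIoc (-T) T) : ‖((1 - |t| / T : ℝ) : ℂ)‖ ≤ 1 := by
    rw [Set.uIoc_of_le (by linarith)] at ht
    have habs : |t| / T ≤ 1 := (div_le_one hT).mpr (abs_le.mpr ⟨ht.1.le, ht.2⟩)
    have habs₀ : 0 ≤ |t| / T := by positivity
    rw [Complex.norm_real, norm_of_nonneg (by linarith)]
    linarith
  have hsummable (t : ℝ) : LSeriesSummable f (σ - t * I) :=
    hf.of_re_le_re (by simp)
  have hdom := intervalIntegral.hasSum_integral_of_dominated_convergence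
    (μ := MeasureTheory.volume) (a := -T) (b := T)
    (F := fun n t ↦ ((1 - |t| / T : ℝ) : ℂ) *
      (LSeries.term f σ n * Complex.exp (t * (log n - u : ℝ) * I)))
    (f := fun t ↦ ((1 - |t| / T : ℝ) : ℂ) *
      (Complex.exp (-(t * u * I)) * LSeries f (σ - t * I)))
    (fun n _ ↦ ‖LSeries.term f σ n‖)
    (fun n ↦ Continuous.aestronglyMeasurable (by fun_prop))
    (fun n ↦ .of_forall fun t ht ↦ by
      rw [norm_mul, norm_mul, hnorm, mul_one]
      exact mul_le_of_le_one_left (norm_nonneg _) (htent ht))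
    (.of_forall fun _ _ ↦ hf.norm) (by simp)
    (.of_forall fun t _ ↦ by
      simp only [← hterm]
      exact ((hsummable t).LSeriesHasSum.mul_left _).mul_left _)
  have hintegral (n : ℕ) : LSeries.term f σ n * fejerKernel T (log n - u) =
      ∫ t in -T..T, ((1 - |t| / T : ℝ) : ℂ) *
        (LSeries.term f σ n * Complex.exp (t * (log n - u : ℝ) * I)) := by
    simp only [mul_left_comm, intervalIntegral.integral_const_mul, integral_tent_mul_exp hT]
  rw [funext hintegral]
  exact hdom

lemma tendsto_fejerTransform_nhdsGT {H : ℂ → ℂ} {σ₀ : ℝ} (hH : ContinuousOn H {s | σ₀ ≤ s.re})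
    (T u : ℝ) : Tendsto (fejerTransform H T · u) (𝓝[>] σ₀) (𝓝 (fejerTransform H T σ₀ u)) := by
  have hcont : Continuous fun σ : ℝ ↦ fejerTransform H T (max σ σ₀) u := by
    have hH' : Continuous fun p : ℝ × ℝ ↦ H ((max p.1 σ₀ : ℝ) - p.2 * I) :=
      hH.comp_continuous (by fun_prop) fun p ↦ by simp
    refine intervalIntegral.continuous_parametric_intervalIntegral_of_continuous' ?_ _ _
    exact Continuous.mul (by fun_prop) (Continuous.mul (by fun_prop) hH')
  have htendsto := (hcont.tendsto σ₀).mono_left (nhdsWithin_le_nhds (s := Set.Ioi σ₀))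
  rw [max_self] at htendsto
  refine htendsto.congr' ?_
  filter_upwards [self_mem_nhdsWithin] with σ hσ
  rw [max_eq_left (le_of_lt hσ)]

lemma tendsto_fejerTransform_atTop (H : ℂ → ℂ) (hT : 0 ≤ T) (σ : ℝ) :
    Tendsto (fejerTransform H T σ) atTop (𝓝 0) := by
  let g : ℝ → ℂ := Set.indicator (Set.Ioc (-T) T)
    fun t ↦ ((1 - |t| / T : ℝ) : ℂ) * H (σ - t * I)
  have hfreq : Tendsto (fun u : ℝ ↦ u / (2 * π)) atTop (cocompact ℝ) :=
    (tendsto_id.atTop_div_const (by positivity)).mono_right atTop_le_cocompact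
  refine ((Real.tendsto_integral_exp_smul_cocompact g).comp hfreq).congr fun u ↦ ?_
  have hchar (t : ℝ) : fourierChar (-(t * (u / (2 * π)))) • g t =
      Set.indicator (Set.Ioc (-T) T) (fun t : ℝ ↦ ((1 - |t| / T : ℝ) : ℂ) *
        (Complex.exp (-(t * u * I)) * H (σ - t * I))) t := by
    by_cases ht : t ∈ Set.Ioc (-T) T
    · have hangle : 2 * π * -(t * (u / (2 * π))) = -(t * u) := by field_simp
      simp only [g, Set.indicator_of_mem ht, Circle.smul_def, fourierChar_apply, smul_eq_mul,
        hangle]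
      push_cast
      ring_nf
    · simp only [g, Set.indicator_of_notMem ht, smul_zero]
  simp only [Function.comp_apply, hchar]
  rw [MeasureTheory.integral_indicator measurableSet_Ioc,
    ← intervalIntegral.integral_of_le (by linarith), fejerTransform]

end FejerTransform

section WienerIkehara

variable {f : ℕ → ℂ} {B T : ℝ}

lemma lseriesSummable_of_sum_norm_le (hB : ∀ N : ℕ, ∑ n ∈ Finset.Ioc 0 N, ‖f n‖ ≤ B * N)
    {s : ℂ} (hs : 1 < s.re) : LSeriesSummable f s := by
  refine LSeriesSummable_of_sum_norm_bigO (r := 1) (.of_bound B (.of_forall fun N ↦ ?_))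
    zero_le_one hs
  rw [rpow_one, norm_of_nonneg (Finset.sum_nonneg fun n _ ↦ norm_nonneg (f n)), Real.norm_natCast]
  exact hB N

lemma norm_term_one (f : ℕ → ℂ) (n : ℕ) : ‖LSeries.term f 1 n‖ = ‖f n‖ / n := by
  rcases eq_or_ne n 0 with rfl | hn
  · simp
  · simp [LSeries.term_of_ne_zero hn]

lemma tsum_term_one_mul_fejerKernel (hB : ∀ N : ℕ, ∑ n ∈ Finset.Ioc 0 N, ‖f n‖ ≤ B * N)
    {H : ℂ → ℂ} (hH : ContinuousOn H {s | 1 ≤ s.re})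
    (hHf : Set.EqOn H (LSeries f) {s | 1 < s.re}) (hT : 0 < T) (u : ℝ) :
    ∑' n, LSeries.term f 1 n * fejerKernel T (log n - u) = fejerTransform H T 1 u := by
  have hright : Tendsto (fun σ : ℝ ↦ ∑' n, LSeries.term f σ n * fejerKernel T (log n - u))
      (𝓝[>] 1) (𝓝 (fejerTransform H T 1 u)) := by
    refine (tendsto_fejerTransform_nhdsGT (by simpa using hH) T u).congr' ?_
    filter_upwards [self_mem_nhdsWithin] with σ hσ
    have hσ' : 1 < (σ : ℂ).re := by simpa using hσ
    rw [(hasSum_term_mul_fejerKernel hT (lseriesSummable_of_sum_norm_le hB hσ') u).tsum_eq]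
    refine intervalIntegral.integral_congr fun t _ ↦ ?_
    simp only [hHf (show 1 < ((σ : ℂ) - t * I).re by simpa using hσ)]
  refine tendsto_nhds_unique ?_ hright
  refine tendsto_tsum_of_dominated_convergence
    (summable_div_mul_fejerKernel (fun n ↦ norm_nonneg (f n)) hB hT u) (fun n ↦ ?_) ?_
  · have hterm : Tendsto (fun s ↦ LSeries.term f s n) (𝓝 1) (𝓝 (LSeries.term f 1 n)) :=
      (LSeries.hasDerivAt_term f n 1).continuousAt
    have hofReal : Tendsto (fun σ : ℝ ↦ (σ : ℂ)) (𝓝[>] 1) (𝓝 1) :=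
      (Complex.continuous_ofReal.tendsto' 1 1 Complex.ofReal_one).mono_left nhdsWithin_le_nhds
    exact (hterm.comp hofReal).mul_const _
  · filter_upwards [self_mem_nhdsWithin] with σ hσ n
    rw [norm_mul, Complex.norm_real, norm_of_nonneg (fejerKernel_nonneg hT.le _),
      ← norm_term_one]
    gcongr
    · exact fejerKernel_nonneg hT.le _
    · exact LSeries.norm_term_le_of_re_le_re f (by simpa using le_of_lt hσ) n

theorem tendsto_tsum_term_one_mul_fejerKernel
    (hB : ∀ N : ℕ, ∑ n ∈ Finset.Ioc 0 N, ‖f n‖ ≤ B * N)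
    {H : ℂ → ℂ} (hH : ContinuousOn H {s | 1 ≤ s.re})
    (hHf : Set.EqOn H (LSeries f) {s | 1 < s.re}) (hT : 0 < T) :
    Tendsto (fun u ↦ ∑' n, LSeries.term f 1 n * fejerKernel T (log n - u)) atTop (𝓝 0) := by
  simpa only [tsum_term_one_mul_fejerKernel hB hH hHf hT] using
    tendsto_fejerTransform_atTop H hT.le 1

end WienerIkehara

section PrimeGap

variable {T c : ℝ}

lemma exists_continuousOn_eqOn_LSeries_vonMangoldt_sub_one :
    ∃ H : ℂ → ℂ, ContinuousOn H {s | 1 ≤ s.re} ∧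
      Set.EqOn H (LSeries fun n ↦ ((Λ n - 1 : ℝ) : ℂ)) {s | 1 < s.re} := by
  classical
  let Z : ℂ → ℂ := Function.update (fun s ↦ riemannZeta s - 1 / (s - 1)) 1 eulerMascheroniConstant
  have hZ : Continuous Z := continuous_iff_continuousAt.mpr fun s ↦ by
    rcases eq_or_ne s 1 with rfl | hs
    · exact continuousAt_update_same.mpr tendsto_riemannZeta_sub_one_div
    · have hs' : s - 1 ≠ 0 := sub_ne_zero.mpr hs
      have hζ := (differentiableAt_riemannZeta hs).continuousAt
      exact (continuousAt_update_of_ne hs).mpr (by fun_prop (disch := assumption))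
  let A : ℂ → ℂ := ArithmeticFunction.vonMangoldt.LFunctionResidueClassAux (1 : ZMod 1)
  have hA : ContinuousOn A {s | 1 ≤ s.re} :=
    ArithmeticFunction.vonMangoldt.continuousOn_LFunctionResidueClassAux 1
  refine ⟨A - Z, hA.sub hZ.continuousOn, fun s (hs : 1 < s.re) ↦ ?_⟩
  have hs₁ : s ≠ 1 := by
    rintro rfl
    simp at hs
  have hresidue : (fun n ↦ ((ArithmeticFunction.vonMangoldt.residueClass (1 : ZMod 1) n : ℝ) : ℂ)) =
      fun n ↦ (Λ n : ℂ) := by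
    ext n
    simp [ArithmeticFunction.vonMangoldt.residueClass, Subsingleton.elim (n : ZMod 1) 1]
  have hAs : A s = LSeries (fun n ↦ (Λ n : ℂ)) s - 1 / (s - 1) := by
    refine (ArithmeticFunction.vonMangoldt.eqOn_LFunctionResidueClassAux isUnit_one hs).trans ?_
    simp [hresidue]
  have hsub : (fun n ↦ ((Λ n - 1 : ℝ) : ℂ)) = (fun n ↦ (Λ n : ℂ)) - 1 := by
    ext n
    simp
  rw [hsub, LSeries_sub (ArithmeticFunction.LSeriesSummable_vonMangoldt hs)
    (LSeriesSummable_one_iff.mpr hs), LSeries_one_eq_riemannZeta hs, Pi.sub_apply, hAs]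
  simp only [Z, Function.update_of_ne hs₁]
  ring

lemma sum_vonMangoldt_le (N : ℕ) : ∑ n ∈ Finset.Ioc 0 N, Λ n ≤ (log 4 + 4) * N := by
  simpa [Chebyshev.psi] using Chebyshev.psi_le_const_mul_self N.cast_nonneg

lemma sum_one_le (N : ℕ) : ∑ _n ∈ Finset.Ioc 0 N, (1 : ℝ) ≤ 1 * N := by simp

lemma tendsto_tsum_vonMangoldt_sub_one_div_mul_fejerKernel (hT : 0 < T) :
    Tendsto (fun u ↦ ∑' n : ℕ, (Λ n - 1) / n * fejerKernel T (log n - u)) atTop (𝓝 0) := by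
  obtain ⟨H, hH, hHΛ⟩ := exists_continuousOn_eqOn_LSeries_vonMangoldt_sub_one
  have hB (N : ℕ) : ∑ n ∈ Finset.Ioc 0 N, ‖((Λ n - 1 : ℝ) : ℂ)‖ ≤ (log 4 + 4 + 1) * N := by
    calc ∑ n ∈ Finset.Ioc 0 N, ‖((Λ n - 1 : ℝ) : ℂ)‖ ≤ ∑ n ∈ Finset.Ioc 0 N, (Λ n + 1) := by
          gcongr with n
          rw [Complex.norm_real]
          refine (norm_sub_le _ _).trans_eq ?_
          rw [norm_of_nonneg ArithmeticFunction.vonMangoldt_nonneg, norm_one]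
      _ ≤ (log 4 + 4) * N + 1 * N := by
          rw [Finset.sum_add_distrib]
          exact add_le_add (sum_vonMangoldt_le N) (sum_one_le N)
      _ = (log 4 + 4 + 1) * N := by ring
  have hterm (u : ℝ) (n : ℕ) : LSeries.term (fun n ↦ ((Λ n - 1 : ℝ) : ℂ)) 1 n *
      fejerKernel T (log n - u) = (((Λ n - 1) / n * fejerKernel T (log n - u) : ℝ) : ℂ) := by
    rcases eq_or_ne n 0 with rfl | hn <;> simp [LSeries.term, *]
  have hlim := tendsto_tsum_term_one_mul_fejerKernel hB hH hHΛ hT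
  simp only [hterm, ← Complex.ofReal_tsum, ← Complex.ofReal_zero] at hlim
  exact tendsto_ofReal_iff.mp hlim

lemma le_tsum_one_div_mul_fejerKernel (hT : 1 ≤ T) {u : ℝ} (hu : 2 * T ≤ exp u) :
    1 / 16 ≤ ∑' n : ℕ, 1 / (n : ℝ) * fejerKernel T (log n - u) := by
  have hT₀ : 0 < T := by linarith
  have hinv : 1 / T ≤ 1 := (div_le_one hT₀).mpr hT
  set Y := exp u with hY
  have hY₀ : 0 < Y := exp_pos u
  let F := Finset.Ioc ⌊Y⌋₊ ⌊Y * (1 + 1 / T)⌋₊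
  have hcard : Y / (2 * T) ≤ F.card := by
    have hYT : 1 ≤ Y / (2 * T) := (one_le_div (by positivity)).mpr hu
    have hYT' : Y * (1 + 1 / T) = Y + 2 * (Y / (2 * T)) := by field_simp
    have hup := Nat.lt_floor_add_one (Y * (1 + 1 / T))
    have hlow := Nat.floor_le hY₀.le
    have hle : ⌊Y⌋₊ ≤ ⌊Y * (1 + 1 / T)⌋₊ :=
      Nat.floor_le_floor (le_mul_of_one_le_right hY₀.le (by simp [hT₀.le]))
    rw [Nat.card_Ioc, Nat.cast_sub hle]
    linarith
  have hterm (n : ℕ) (hn : n ∈ F) :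
      1 / (2 * Y) * (T / 4) ≤ 1 / (n : ℝ) * fejerKernel T (log n - u) := by
    obtain ⟨hYn, hnY⟩ := Finset.mem_Ioc.mp hn
    replace hYn : Y < n := (Nat.floor_lt hY₀.le).mp hYn
    replace hnY : (n : ℝ) ≤ Y * (1 + 1 / T) := (Nat.le_floor_iff (by positivity)).mp hnY
    have hn₀ : (0 : ℝ) < n := hY₀.trans hYn
    have hlog : log n - u = log (n / Y) := by rw [log_div hn₀.ne' hY₀.ne', hY, log_exp]
    rw [hlog]
    gcongr
    · nlinarith
    · refine div_four_le_fejerKernel hT₀ (log_nonneg ((one_le_div hY₀).mpr hYn.le)) ?_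
      refine (log_le_sub_one_of_pos (by positivity)).trans ?_
      rw [sub_le_iff_le_add', div_le_iff₀' hY₀]
      exact hnY
  calc 1 / 16 = Y / (2 * T) * (1 / (2 * Y) * (T / 4)) := by field_simp; norm_num
    _ ≤ F.card * (1 / (2 * Y) * (T / 4)) := by gcongr
    _ = ∑ _n ∈ F, 1 / (2 * Y) * (T / 4) := by rw [Finset.sum_const, nsmul_eq_mul]
    _ ≤ ∑ n ∈ F, 1 / (n : ℝ) * fejerKernel T (log n - u) := Finset.sum_le_sum hterm
    _ ≤ ∑' n : ℕ, 1 / (n : ℝ) * fejerKernel T (log n - u) :=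
        (summable_div_mul_fejerKernel (fun _ ↦ zero_le_one) sum_one_le hT₀ u).sum_le_tsum F
          fun n _ ↦ mul_nonneg (by positivity) (fejerKernel_nonneg hT₀.le _)

lemma tendsto_psi_sub_theta_div :
    Tendsto (fun N : ℕ ↦ (Chebyshev.psi N - Chebyshev.theta N) / N) atTop (𝓝 0) := by
  have hsqrt : sqrt =o[atTop] fun x : ℝ ↦ x := by
    refine (Asymptotics.isLittleO_iff_tendsto' ?_).mpr ?_
    · filter_upwards [eventually_gt_atTop 0] with x hx hx'
      exact absurd hx' hx.ne'
    · exact tendsto_sqrt_atTop.inv_tendsto_atTop.congr fun x ↦ sqrt_div_self.symm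
  exact (Chebyshev.isBigO_psi_sub_theta_sqrt.trans_isLittleO hsqrt).tendsto_div_nhds_zero.comp
    tendsto_natCast_atTop_atTop

lemma vonMangoldt_div_mul_fejerKernel_le (hT : 0 < T) (hc₀ : 0 < c) (hc₁ : c < 1) {N : ℕ}
    (hprime : ∀ p : ℕ, p.Prime → c * N < p → N < p) (n : ℕ) :
    Λ n / n * fejerKernel T (log n - (log N + log c / 2)) ≤
      4 * (1 + 1 / (log c / 2) ^ 2) / T *
        (Λ n / n * (1 + (log n - (log N + log c / 2)) ^ 2)⁻¹) +
      if n ∈ {n ∈ Finset.Ioc 0 N | ¬ n.Prime} then T / (c * N) * Λ n else 0 := by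
  have hΛ : 0 ≤ Λ n := ArithmeticFunction.vonMangoldt_nonneg
  have hη : 0 < -(log c / 2) := by linarith [log_neg hc₀ hc₁]
  set v := log n - (log N + log c / 2) with hv
  rcases eq_or_ne n 0 with rfl | hn
  · simp
  have hn₀ : (0 : ℝ) < n := Nat.cast_pos.mpr (Nat.pos_of_ne_zero hn)
  rcases le_or_gt (-(log c / 2)) |v| with hfar | hnear
  · refine le_add_of_le_of_nonneg ?_ (by positivity)
    rw [mul_left_comm]
    refine mul_le_mul_of_nonneg_left ?_ (by positivity)
    simpa only [neg_sq] using fejerKernel_le_of_le_abs hT hη hfar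
  · obtain ⟨hlow, hup⟩ := abs_lt.mp hnear
    have hN₀ : (0 : ℝ) < N := Nat.cast_pos.mpr <| Nat.pos_of_ne_zero <| by
      rintro rfl
      have hlog := log_natCast_nonneg n
      simp only [Nat.cast_zero, log_zero] at hv
      linarith
    have hnN : n < N := by
      exact_mod_cast (log_lt_log_iff hn₀ hN₀).mp (by linarith)
    have hcn : c * N < n := by
      rw [← log_lt_log_iff (by positivity) hn₀, log_mul hc₀.ne' hN₀.ne']
      linarith
    rw [if_pos (by
      simp only [Finset.mem_filter, Finset.mem_Ioc]
      exact ⟨⟨Nat.pos_of_ne_zero hn, hnN.le⟩, fun hp ↦ (hprime n hp hcn).not_gt hnN⟩)]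
    refine le_add_of_nonneg_of_le (by positivity) ?_
    calc Λ n / n * fejerKernel T v ≤ Λ n / (c * N) * T := by
          gcongr
          exacts [fejerKernel_nonneg hT.le v, fejerKernel_le hT.le v]
      _ = T / (c * N) * Λ n := by ring

lemma tsum_vonMangoldt_div_mul_fejerKernel_le {A : ℝ}
    (hA : ∀ (u : ℝ) (F : Finset ℕ), ∑ n ∈ F, Λ n / n * (1 + (log n - u) ^ 2)⁻¹ ≤ A) (hT : 0 < T)
    (hc₀ : 0 < c) (hc₁ : c < 1) {N : ℕ} (hprime : ∀ p : ℕ, p.Prime → c * N < p → N < p) :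
    ∑' n : ℕ, Λ n / n * fejerKernel T (log n - (log N + log c / 2)) ≤
      4 * (1 + 1 / (log c / 2) ^ 2) / T * A +
        T / c * ((Chebyshev.psi N - Chebyshev.theta N) / N) := by
  have hΛ (n : ℕ) : 0 ≤ Λ n := ArithmeticFunction.vonMangoldt_nonneg
  refine tsum_le_of_sum_le (fun n ↦ mul_nonneg (div_nonneg (hΛ n) n.cast_nonneg)
    (fejerKernel_nonneg hT.le _)) fun F ↦ ?_
  refine (Finset.sum_le_sum fun n _ ↦
    vonMangoldt_div_mul_fejerKernel_le hT hc₀ hc₁ hprime n).trans ?_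
  rw [Finset.sum_add_distrib, ← Finset.mul_sum, Finset.sum_ite_mem, ← Finset.mul_sum]
  refine add_le_add (mul_le_mul_of_nonneg_left (hA _ F) (by positivity)) ?_
  rw [Chebyshev.psi_sub_theta_eq_sum_not_prime, Nat.floor_natCast, div_mul_div_comm,
    mul_div_right_comm]
  gcongr
  exact Finset.inter_subset_right

theorem eventually_exists_prime_mem_Ioc (hc₀ : 0 < c) (hc₁ : c < 1) :
    ∀ᶠ N : ℕ in atTop, ∃ p : ℕ, p.Prime ∧ c * N < p ∧ p ≤ N := by
  have hΛ (n : ℕ) : 0 ≤ Λ n := ArithmeticFunction.vonMangoldt_nonneg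
  obtain ⟨A, hA₀, hA⟩ := exists_sum_div_mul_inv_one_add_sq_le hΛ sum_vonMangoldt_le
  set D := 4 * (1 + 1 / (log c / 2) ^ 2)
  set T := 1 + 64 * (D * A)
  have hT₁ : 1 ≤ T := by
    have : 0 ≤ D * A := by positivity
    linarith
  have hT₀ : 0 < T := by linarith
  have hDA : D / T * A ≤ 1 / 64 := by
    rw [div_mul_eq_mul_div, div_le_iff₀ hT₀]
    linarith
  have hu : Tendsto (fun N : ℕ ↦ log N + log c / 2) atTop atTop :=
    tendsto_atTop_add_const_right _ _ (tendsto_log_atTop.comp tendsto_natCast_atTop_atTop)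
  have hdiff := (tendsto_tsum_vonMangoldt_sub_one_div_mul_fejerKernel hT₀).comp hu
  have hpsi := tendsto_psi_sub_theta_div.const_mul (T / c)
  rw [mul_zero] at hpsi
  filter_upwards [hdiff.eventually (lt_mem_nhds (show -(1 / 64 : ℝ) < 0 by norm_num)),
    hpsi.eventually (gt_mem_nhds (show (0 : ℝ) < 1 / 64 by norm_num)),
    (tendsto_exp_atTop.comp hu).eventually_ge_atTop (2 * T)] with N hN₁ hN₂ hN₃
  by_contra! hprime
  have hsplit : ∑' n : ℕ, Λ n / n * fejerKernel T (log n - (log N + log c / 2)) =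
      ∑' n : ℕ, 1 / (n : ℝ) * fejerKernel T (log n - (log N + log c / 2)) +
      ∑' n : ℕ, (Λ n - 1) / n * fejerKernel T (log n - (log N + log c / 2)) := by
    have hsummable := summable_div_mul_fejerKernel hΛ sum_vonMangoldt_le hT₀ (log N + log c / 2)
    have hsummable₁ := summable_div_mul_fejerKernel (fun _ ↦ zero_le_one) sum_one_le hT₀
      (log N + log c / 2)
    rw [← sub_eq_iff_eq_add', ← hsummable.tsum_sub hsummable₁]
    exact tsum_congr fun n ↦ by ring
  have hlower := le_tsum_one_div_mul_fejerKernel hT₁ hN₃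
  have hupper := tsum_vonMangoldt_div_mul_fejerKernel_le hA hT₀ hc₀ hc₁ hprime
  simp only [Function.comp_apply] at hN₁
  linarith

end PrimeGap

section ExplicitABC

variable {N k M : ℕ}

lemma rad_pos (n : ℕ) : 0 < rad n :=
  Finset.prod_pos fun _ hp ↦ Nat.pos_of_mem_primeFactors hp

lemma log_rad (n : ℕ) : log (rad n) = ∑ p ∈ n.primeFactors, log p := by
  rw [rad, Nat.cast_prod]
  exact log_prod fun p hp ↦ Nat.cast_ne_zero.mpr (Nat.pos_of_mem_primeFactors hp).ne'

lemma log_rad_le (n k : ℕ) :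
    log (rad n) ≤ ∑ p ∈ n.primeFactors with k < p, log p + log 4 * k := by
  rw [log_rad, ← Finset.sum_filter_add_sum_filter_not _ (k < ·)]
  gcongr
  refine le_trans ?_ (Chebyshev.theta_le_log4_mul_x k.cast_nonneg)
  rw [Chebyshev.theta_eq_sum_primesLE_log]
  refine Finset.sum_le_sum_of_subset_of_nonneg (fun p hp ↦ ?_) fun p _ _ ↦ log_natCast_nonneg p
  obtain ⟨hp, hpk⟩ := Finset.mem_filter.mp hp
  exact Nat.mem_primesLE.mpr ⟨not_lt.mp hpk, Nat.prime_of_mem_primeFactors hp⟩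

lemma ExplicitABC.log_succ_le (habc : ExplicitABC) {n : ℕ} (hn : 0 < n) :
    log (n + 1 : ℕ) ≤ 7 / 4 * log (rad (n * (n + 1))) := by
  have hlt := habc 1 n (n + 1) one_pos hn n.succ_pos (Nat.coprime_one_left _)
    (Nat.coprime_one_left _) (by simp) (add_comm _ _)
  rw [one_mul] at hlt
  rw [← log_rpow (Nat.cast_pos.mpr (rad_pos _))]
  exact (log_lt_log (Nat.cast_pos.mpr n.succ_pos) hlt).le

lemma eq_of_dvd_of_mem_Ioc {p x y : ℕ} (hp : k ≤ p) (hx : x ∈ Finset.Ioc (N - k) N)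
    (hy : y ∈ Finset.Ioc (N - k) N) (hpx : p ∣ x) (hpy : p ∣ y) : x = y := by
  wlog hxy : x ≤ y generalizing x y
  · exact (this hy hx hpy hpx (le_of_not_ge hxy)).symm
  rw [Finset.mem_Ioc] at hx hy
  have hsub := Nat.eq_zero_of_dvd_of_lt (Nat.dvd_sub hpy hpx) (by omega)
  omega

lemma sum_log_primeFactors_consecutive_le (hk : k ≤ N)
    (hM : ∀ x ∈ Finset.Ioc (N - k) N, ∀ p ∈ x.primeFactors, p ≤ M) :
    ∑ i ∈ Finset.range (k / 2),
      ∑ p ∈ ((N - 2 * i - 1) * (N - 2 * i)).primeFactors with k < p, log p ≤ log 4 * M := by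
  have hfactor {i p : ℕ} (hi : i < k / 2)
      (hp : p ∈ {p ∈ ((N - 2 * i - 1) * (N - 2 * i)).primeFactors | k < p}) :
      k < p ∧ ∃ x ∈ Finset.Ioc (N - k) N, p ∈ x.primeFactors ∧ (N - x) / 2 = i := by
    obtain ⟨hp, hkp⟩ := Finset.mem_filter.mp hp
    rw [Nat.primeFactors_mul (by omega) (by omega), Finset.mem_union] at hp
    exact ⟨hkp, hp.elim (fun hp ↦ ⟨_, by simp; omega, hp, by omega⟩)
      fun hp ↦ ⟨_, by simp; omega, hp, by omega⟩⟩
  rw [← Finset.sum_biUnion]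
  · refine le_trans ?_ (Chebyshev.theta_le_log4_mul_x M.cast_nonneg)
    rw [Chebyshev.theta_eq_sum_primesLE_log]
    refine Finset.sum_le_sum_of_subset_of_nonneg (fun p hp ↦ ?_) fun p _ _ ↦ log_natCast_nonneg p
    obtain ⟨i, hi, hp⟩ := Finset.mem_biUnion.mp hp
    obtain ⟨-, x, hx, hpx, -⟩ := hfactor (Finset.mem_range.mp hi) hp
    exact Nat.mem_primesLE.mpr ⟨hM x hx p hpx, Nat.prime_of_mem_primeFactors hpx⟩
  · intro i hi j hj hij
    refine Finset.disjoint_left.mpr fun p hp hp' ↦ hij ?_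
    obtain ⟨hkp, x, hx, hpx, rfl⟩ := hfactor (Finset.mem_range.mp hi) hp
    obtain ⟨-, y, hy, hpy, rfl⟩ := hfactor (Finset.mem_range.mp hj) hp'
    rw [eq_of_dvd_of_mem_Ioc hkp.le hx hy (Nat.dvd_of_mem_primeFactors hpx)
      (Nat.dvd_of_mem_primeFactors hpy)]

/-- Some pair of consecutive integers in `(N - k, N]` has a small radical, because a prime larger
than `k` divides at most one of these integers. -/
theorem ExplicitABC.log_le_of_primeFactors_le (habc : ExplicitABC) (hk : 2 ≤ k)
    (hkN : N < 2 * (N - k)) (hM : ∀ x ∈ Finset.Ioc (N - k) N, ∀ p ∈ x.primeFactors, p ≤ M) :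
    log N ≤ 16 * (M / k + k) := by
  have hk₀ : (2 : ℝ) ≤ k := mod_cast hk
  have hhalf₀ : (0 : ℝ) < (k / 2 : ℕ) := mod_cast Nat.div_pos hk two_pos
  have hhalf : (k : ℝ) ≤ 3 * (k / 2 : ℕ) := mod_cast (by omega : k ≤ 3 * (k / 2))
  obtain ⟨i, hi, hsum⟩ : ∃ i ∈ Finset.range (k / 2),
      ∑ p ∈ ((N - 2 * i - 1) * (N - 2 * i)).primeFactors with k < p, log p ≤
        log 4 * M / (k / 2 : ℕ) := by
    refine Finset.exists_le_of_sum_le (Finset.nonempty_range_iff.mpr (by omega)) ?_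
    rw [Finset.sum_const, Finset.card_range, nsmul_eq_mul, mul_div_cancel₀ _ hhalf₀.ne']
    exact sum_log_primeFactors_consecutive_le (by omega) hM
  rw [Finset.mem_range] at hi
  have hlog4 : log 4 ≤ 1.4 := by
    rw [log_four_eq]
    linarith [log_two_lt_d9]
  have hrad : log (rad ((N - 2 * i - 1) * (N - 2 * i))) ≤ 1.4 * (3 * (M / k)) + 1.4 * k := by
    have hMk : (M : ℝ) / (k / 2 : ℕ) ≤ 3 * (M / k) := by
      rw [← mul_div_assoc, div_le_div_iff₀ hhalf₀ (by linarith)]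
      nlinarith [M.cast_nonneg (α := ℝ)]
    refine (log_rad_le _ k).trans (add_le_add (hsum.trans ?_) (by gcongr))
    rw [mul_div_assoc]
    gcongr
  have habc' := habc.log_succ_le (show 0 < N - 2 * i - 1 by omega)
  rw [Nat.sub_add_cancel (by omega)] at habc'
  have hN : log N ≤ log 2 + log (N - 2 * i : ℕ) := by
    rw [← log_mul two_ne_zero (Nat.cast_ne_zero.mpr (by omega))]
    exact log_le_log (Nat.cast_pos.mpr (by omega)) (mod_cast (by omega : N ≤ 2 * (N - 2 * i)))
  have hMk : (0 : ℝ) ≤ M / k := by positivity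
  linarith [log_two_lt_d9]

end ExplicitABC

/-- The growth estimates linking the largest factorial argument `N`, its gap `k` to the argument it
is paired with, and the largest unpaired argument `M` of a solution. The constant `C` only depends
on the shape of the equation. -/
structure GapEstimates (C : ℝ) (N k M : ℕ) : Prop where
  two_le_gap : 2 ≤ k
  two_le_max : 2 ≤ M
  max_le : M ≤ C * (k + log N)
  gap_mul_log_le : k * log N ≤ C * (M * log M)
  max_mul_log_sub_le : M * log M - M ≤ C * (k * log N)
  log_le : log N ≤ C * (M / k + k)
  gap_mul_log_sub_log_le : k * (log N - log k) ≤ C * (k + log N + log N * log M)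
  not_prime : ∀ p, N - k < p → p ≤ N → ¬ p.Prime

namespace GapEstimates

variable {C : ℝ} {N k M : ℕ}

lemma log_le_mul_exp (h : GapEstimates C N k M) (hC : 0 ≤ C) (hk : C * k ≤ log N / 2) :
    log N ≤ C * exp (2 * C ^ 2 + 1) := by
  have hk₂ : (2 : ℝ) ≤ k := mod_cast h.two_le_gap
  have hM : (0 : ℝ) < M := mod_cast two_pos.trans_le h.two_le_max
  have hmul : k * log N ≤ 2 * C * M := by
    have hdiv : log N / 2 ≤ C * M / k := by linarith [h.log_le, mul_div_assoc C (M : ℝ) k]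
    rw [le_div_iff₀ (by linarith)] at hdiv
    linarith
  have hlogM : log M ≤ 2 * C ^ 2 + 1 := by
    refine le_of_mul_le_mul_left ?_ hM
    nlinarith [h.max_mul_log_sub_le]
  have hmax : (M : ℝ) ≤ exp (2 * C ^ 2 + 1) := (log_le_iff_le_exp hM).mp hlogM
  nlinarith [log_natCast_nonneg N]

lemma mul_gap_le_half_log (h : GapEstimates C N k M) (hC : 1 ≤ C) (hN : 1 ≤ log N)
    (hlog : 4 * C ^ 3 * (log (2 * C) + 2 * log (log N)) ≤ log N) (hk : k ≤ log N ^ 2) :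
    C * k ≤ log N / 2 := by
  set L := log N
  set b := log (2 * C) + 2 * log L
  have hM : (0 : ℝ) < M := mod_cast two_pos.trans_le h.two_le_max
  have : 0 ≤ b := add_nonneg (log_nonneg (by linarith)) (by linarith [log_nonneg hN])
  have hlogM : log M ≤ b := by
    have hmax : M ≤ 2 * C * L ^ 2 := by
      calc (M : ℝ) ≤ C * (k + L) := h.max_le
        _ ≤ C * (L ^ 2 + L ^ 2) := by gcongr; nlinarith
        _ = 2 * C * L ^ 2 := by ring
    refine (log_le_log hM hmax).trans_eq ?_
    rw [log_mul (by positivity) (by positivity), log_pow, Nat.cast_two]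
  have hgap : k * L ≤ C ^ 2 * b * (k + L) := by
    calc k * L ≤ C * (M * log M) := h.gap_mul_log_le
      _ ≤ C * (C * (k + L) * b) := by
        gcongr
        exact h.max_le
      _ = C ^ 2 * b * (k + L) := by ring
  have hbL : C ^ 2 * b ≤ L / 2 := by nlinarith [sq_nonneg C]
  have hk₁ : k ≤ 2 * C ^ 2 * b := le_of_mul_le_mul_right (by nlinarith) (by linarith : 0 < L)
  nlinarith

lemma log_sub_log_gap_le (h : GapEstimates C N k M) (hC : 1 ≤ C) (hN : 1 ≤ log N)
    (hk : log N ^ 2 ≤ k) : log N - log k ≤ C * (4 + log (2 * C)) := by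
  set L := log N
  have hM : (0 : ℝ) < M := mod_cast two_pos.trans_le h.two_le_max
  have hk₀ : (0 : ℝ) < k := by nlinarith
  have hLk : L ≤ k := by nlinarith
  have hC₀ : 0 ≤ log (2 * C) := log_nonneg (by linarith)
  have hsqrt : L ≤ √k := le_sqrt_of_sq_le hk
  have hlogk : log k ≤ 2 * √k := by
    have := log_le_sub_one_of_pos (sqrt_pos.mpr hk₀)
    rw [log_sqrt hk₀.le] at this
    linarith
  have hlogM : log M ≤ log (2 * C) + 2 * √k := by
    have hmax : M ≤ 2 * C * k := by nlinarith [h.max_le]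
    have := log_le_log hM hmax
    rw [log_mul (by positivity) hk₀.ne'] at this
    linarith
  have hLM : L * log M ≤ (log (2 * C) + 2) * k := by
    calc L * log M ≤ L * (log (2 * C) + 2 * √k) := by gcongr
      _ = log (2 * C) * L + 2 * (L * √k) := by ring
      _ ≤ log (2 * C) * k + 2 * (√k * √k) := by gcongr
      _ = (log (2 * C) + 2) * k := by rw [mul_self_sqrt hk₀.le]; ring
  refine le_of_mul_le_mul_left ?_ hk₀
  calc k * (L - log k) ≤ C * (k + L + L * log M) := h.gap_mul_log_sub_log_le
    _ ≤ C * (k + k + (log (2 * C) + 2) * k) := by gcongr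
    _ = k * (C * (4 + log (2 * C))) := by ring

/-- A gap `k ≤ (log N)²` is excluded by the growth estimates alone, and a larger one is a positive
proportion of `N`, so that `(N - k, N]` contains a prime. -/
theorem bddAbove_setOf (hC : 1 ≤ C) : BddAbove {N | ∃ k M, GapEstimates C N k M} := by
  set D := C * (4 + log (2 * C))
  have hD : 0 < D := mul_pos (by linarith) (by linarith [log_nonneg (show 1 ≤ 2 * C by linarith)])
  have hloglog : ∀ᶠ L in atTop, 4 * C ^ 3 * (log (2 * C) + 2 * log L) ≤ L := by
    have hlittle : (fun L ↦ 4 * C ^ 3 * (log (2 * C) + 2 * log L)) =o[atTop] (id : ℝ → ℝ) :=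
      ((Asymptotics.isLittleO_const_id_atTop _).add
        (isLittleO_log_id_atTop.const_mul_left 2)).const_mul_left _
    filter_upwards [hlittle.def one_pos, eventually_ge_atTop 0] with L hL hL₀
    rw [one_mul, id, norm_of_nonneg hL₀] at hL
    exact (le_norm_self _).trans hL
  have hlogN : Tendsto (fun N : ℕ ↦ log N) atTop atTop :=
    tendsto_log_atTop.comp tendsto_natCast_atTop_atTop
  have hlarge := (hlogN.eventually (hloglog.and ((eventually_ge_atTop 1).and
    (eventually_gt_atTop (C * exp (2 * C ^ 2 + 1)))))).and
    (eventually_exists_prime_mem_Ioc (c := 1 - exp (-D)) (by simpa using hD) (by simp [exp_pos]))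
  obtain ⟨N₀, hN₀⟩ := eventually_atTop.mp hlarge
  refine ⟨N₀, fun N ⟨k, M, h⟩ ↦ ?_⟩
  by_contra! hN
  obtain ⟨⟨hlog, hlog₁, hlogC⟩, p, hp, hDp, hpN⟩ := hN₀ N hN.le
  rcases le_total (k : ℝ) (log N ^ 2) with hk | hk
  · exact hlogC.not_ge (h.log_le_mul_exp (by linarith) (h.mul_gap_le_half_log hC hlog₁ hlog hk))
  · have hkN : exp (-D) * N ≤ k := by
      have hN₀ : (0 : ℝ) < N := mod_cast hp.pos.trans_le hpN
      have hk₀ : (0 : ℝ) < k := mod_cast two_pos.trans_le h.two_le_gap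
      rw [← log_le_log_iff (by positivity) hk₀, log_mul (exp_pos _).ne' hN₀.ne', log_exp]
      linarith [h.log_sub_log_gap_le hC hlog₁ hk]
    have hNp : (N : ℝ) < p + k := by linarith
    have hNp' : N < p + k := mod_cast hNp
    have hp₀ := hp.pos
    exact h.not_prime p (by omega) hpN hp

end GapEstimates

section Factorial

variable {n N d k : ℕ} {x : ℝ}

lemma le_mul_factorization_factorial {p : ℕ} (hp : p.Prime) (n : ℕ) :
    n ≤ (p - 1) * (n.factorial.factorization p + (Nat.log p n + 1)) := by
  rcases eq_or_ne n 0 with rfl | hn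
  · exact Nat.zero_le _
  have hdigits : (p.digits n).sum ≤ (Nat.log p n + 1) * (p - 1) := by
    rw [← Nat.length_digits p n hp.one_lt hn]
    exact List.sum_le_card_nsmul _ _ fun d hd ↦
      Nat.le_sub_one_of_lt (Nat.digits_lt_base hp.one_lt hd)
  rw [mul_add, Nat.sub_one_mul_factorization_factorial hp]
  linarith [Nat.digit_sum_le p n, Nat.sub_add_cancel (Nat.digit_sum_le p n)]

lemma natLog_two_add_one_le (hN : 2 ≤ N) : (Nat.log 2 N : ℝ) + 1 ≤ 3 * log N := by
  have hlog : log 2 ≤ log N := log_le_log two_pos (mod_cast hN)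
  have hfloor := natLog_le_logb N 2
  rw [logb, Nat.cast_two, le_div_iff₀ (log_pos one_lt_two)] at hfloor
  nlinarith [log_two_gt_d9]

lemma mul_log_sub_le_log_factorial (hx : 0 < x) (n : ℕ) : n * log x - x ≤ log n ! := by
  have hlog := log_le_log (by positivity) (pow_div_factorial_le_exp x hx.le n)
  rw [log_div (by positivity) (by positivity), log_pow, log_exp] at hlog
  linarith

lemma log_factorial_le (hn : n ≤ N) : log n ! ≤ n * log N := by
  rw [← log_pow]
  exact log_le_log (by positivity) (mod_cast n.factorial_le_pow.trans (Nat.pow_le_pow_left hn n))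

lemma log_descFactorial_le (hd : d ≤ n) (hn : n ≤ N) : log (n.descFactorial d) ≤ d * log N := by
  rw [← log_pow]
  exact log_le_log (mod_cast Nat.descFactorial_pos.mpr hd)
    (mod_cast (n.descFactorial_le_pow d).trans (Nat.pow_le_pow_left hn d))

lemma log_factorial_le_log_descFactorial (hd : d ≤ n) : log d ! ≤ log (n.descFactorial d) :=
  log_le_log (by positivity) (mod_cast Nat.le_of_dvd (Nat.descFactorial_pos.mpr hd)
    (Nat.factorial_dvd_descFactorial n d))

lemma mul_log_le_log_descFactorial (hk : k ≤ N) :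
    k * log (N + 1 - k : ℕ) ≤ log (N.descFactorial k) := by
  rw [← log_pow]
  have : 0 < N + 1 - k := by omega
  exact log_le_log (by positivity) (mod_cast N.pow_sub_le_descFactorial k)

lemma mul_log_half_le_log_descFactorial (hk : N < 2 * (N - k)) :
    k * (log N - 1) ≤ log (N.descFactorial k) := by
  have hlog : log N - 1 ≤ log (N + 1 - k : ℕ) := by
    have hle := log_le_log (Nat.cast_pos.mpr (by omega))
      (show (N : ℝ) ≤ 2 * (N + 1 - k : ℕ) from mod_cast (by omega : N ≤ 2 * (N + 1 - k)))
    rw [log_mul two_ne_zero (Nat.cast_ne_zero.mpr (by omega))] at hle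
    linarith [log_two_lt_d9]
  exact (mul_le_mul_of_nonneg_left hlog k.cast_nonneg).trans
    (mul_log_le_log_descFactorial (by omega))

lemma dvd_descFactorial (hx : n ∈ Finset.Ioc (N - k) N) : n ∣ N.descFactorial k := by
  rw [Finset.mem_Ioc] at hx
  rw [Nat.descFactorial_eq_prod_range, show n = N - (N - n) by omega]
  exact Finset.dvd_prod_of_mem _ (Finset.mem_range.mpr (by omega))

end Factorial

section Unpaired

variable {α β : Type*} (ι : β → α)

/-- The gap `n j - a (ι j)` between an argument on the right-hand side and the argument paired with
it, truncated at `0`. -/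
def gap (a : α → ℕ) (n : β → ℕ) (j : β) : ℕ := n j - a (ι j)

lemma gap_le_self (a : α → ℕ) (n : β → ℕ) (j : β) : gap ι a n j ≤ n j := Nat.sub_le _ _

variable [Fintype α]

open scoped Classical in
/-- The indices that the pairing `ι` leaves alone. -/
noncomputable def unpaired : Finset α := {l | l ∉ Set.range ι}

/-- The largest unpaired argument on the left-hand side, `0` if there is none. -/
noncomputable def maxUnpaired (a : α → ℕ) : ℕ := (unpaired ι).sup a

variable {ι}

lemma le_maxUnpaired {a : α → ℕ} {l : α} (hl : l ∈ unpaired ι) : a l ≤ maxUnpaired ι a :=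
  Finset.le_sup hl

@[to_additive]
lemma prod_eq_prod_unpaired_mul [Fintype β] {R : Type*} [CommMonoid R]
    (hι : Function.Injective ι) (f : α → R) :
    ∏ l, f l = (∏ l ∈ unpaired ι, f l) * ∏ j, f (ι j) := by
  classical
  rw [← Finset.prod_compl_mul_prod (Finset.univ.image ι), Finset.prod_image hι.injOn]
  congr 2
  ext l
  simp [unpaired]

lemma sum_unpaired_log_factorial_le (a : α → ℕ) :
    ∑ l ∈ unpaired ι, log (a l)! ≤ (∑ l ∈ unpaired ι, (a l : ℝ)) * log (maxUnpaired ι a) := by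
  rw [Finset.sum_mul]
  exact Finset.sum_le_sum fun l hl ↦ log_factorial_le (le_maxUnpaired hl)

lemma sum_unpaired_le_card_mul (a : α → ℕ) :
    (∑ l ∈ unpaired ι, a l : ℝ) ≤ Fintype.card α * maxUnpaired ι a := by
  have hle := Finset.sum_le_card_nsmul _ a _ fun l (hl : l ∈ unpaired ι) ↦ le_maxUnpaired hl
  exact mod_cast hle.trans (Nat.mul_le_mul_right _ (Finset.card_le_univ _))

end Unpaired

/-- A solution of `∏ l, (a l)! = ∏ j, (n j)!` in which each `n j` is paired with a smaller
`a (ι j)`. The largest arguments `n z` and `a (ι z)` are paired with each other, they differ by at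
least `2`, and `c₀` times their gap bounds the other gaps. The index types carry no order: a
distinguished index `z` takes the place of the monotonicity of the arguments. -/
structure PairedSolution {α β : Type*} [Fintype α] [Fintype β] (ι : β → α) (z : β) (c₀ : ℕ)
    (a : α → ℕ) (n : β → ℕ) : Prop where
  le_left : ∀ l, a l ≤ a (ι z)
  le_right : ∀ j, n j ≤ n z
  prod_eq : ∏ l, (a l)! = ∏ j, (n j)!
  add_two_le : a (ι z) + 2 ≤ n z
  lt : ∀ j, a (ι j) < n j
  gap_le : ∀ j, gap ι a n j ≤ c₀ * gap ι a n z

namespace PairedSolution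

variable {α β : Type*} [Fintype α] [Fintype β] {ι : β → α} {z : β} {c₀ : ℕ} {a : α → ℕ}
  {n : β → ℕ}

lemma two_le_gap (h : PairedSolution ι z c₀ a n) : 2 ≤ gap ι a n z :=
  Nat.le_sub_of_add_le' h.add_two_le

lemma sub_gap (h : PairedSolution ι z c₀ a n) (j : β) : n j - gap ι a n j = a (ι j) :=
  Nat.sub_sub_self (h.lt j).le

lemma prod_unpaired_factorial (h : PairedSolution ι z c₀ a n) (hι : Function.Injective ι) :
    ∏ l ∈ unpaired ι, (a l)! = ∏ j, (n j).descFactorial (gap ι a n j) := by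
  refine Nat.eq_of_mul_eq_mul_right
    (Finset.prod_pos fun j (_ : j ∈ Finset.univ) ↦ (a (ι j)).factorial_pos) ?_
  rw [← prod_eq_prod_unpaired_mul hι (fun l ↦ (a l)!), h.prod_eq, ← Finset.prod_mul_distrib]
  refine Finset.prod_congr rfl fun j _ ↦ ?_
  rw [mul_comm, ← h.sub_gap j, Nat.factorial_mul_descFactorial (gap_le_self ι a n j)]

lemma sum_unpaired_log_factorial (h : PairedSolution ι z c₀ a n) (hι : Function.Injective ι) :
    ∑ l ∈ unpaired ι, log (a l)! = ∑ j, log ((n j).descFactorial (gap ι a n j)) := by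
  rw [← log_prod fun l _ ↦ Nat.cast_ne_zero.mpr (a l).factorial_ne_zero, ← Nat.cast_prod,
    h.prod_unpaired_factorial hι, Nat.cast_prod]
  exact log_prod fun j _ ↦
    Nat.cast_ne_zero.mpr (Nat.descFactorial_pos.mpr (gap_le_self ι a n j)).ne'

lemma le_maxUnpaired_of_mem_primeFactors (h : PairedSolution ι z c₀ a n)
    (hι : Function.Injective ι) {x p : ℕ} (hx : x ∈ Finset.Ioc (n z - gap ι a n z) (n z))
    (hp : p ∈ x.primeFactors) : p ≤ maxUnpaired ι a := by
  have hpp := Nat.prime_of_mem_primeFactors hp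
  have hdvd : p ∣ ∏ l ∈ unpaired ι, (a l)! := by
    rw [h.prod_unpaired_factorial hι]
    exact ((Nat.dvd_of_mem_primeFactors hp).trans (dvd_descFactorial hx)).trans
      (Finset.dvd_prod_of_mem _ (Finset.mem_univ z))
  obtain ⟨l, hl, hpl⟩ := (hpp.prime.dvd_finsetProd_iff _).mp hdvd
  exact (hpp.dvd_factorial.mp hpl).trans (le_maxUnpaired hl)

lemma two_le_maxUnpaired (h : PairedSolution ι z c₀ a n) (hι : Function.Injective ι) :
    2 ≤ maxUnpaired ι a := by
  have := h.add_two_le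
  have := h.two_le_gap
  have hmin := Nat.minFac_prime (show n z ≠ 1 by omega)
  exact hmin.two_le.trans (h.le_maxUnpaired_of_mem_primeFactors hι (Finset.mem_Ioc.mpr (by omega))
    (hmin.mem_primeFactors (n z).minFac_dvd (by omega)))

lemma maxUnpaired_le_left (h : PairedSolution ι z c₀ a n) : maxUnpaired ι a ≤ a (ι z) :=
  Finset.sup_le fun l _ ↦ h.le_left l

lemma not_prime (h : PairedSolution ι z c₀ a n) (hι : Function.Injective ι) {p : ℕ}
    (hlt : n z - gap ι a n z < p) (hle : p ≤ n z) : ¬ p.Prime := fun hp ↦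
  (h.le_maxUnpaired_of_mem_primeFactors hι (Finset.mem_Ioc.mpr ⟨hlt, hle⟩)
    (hp.mem_primeFactors_self)).not_gt (h.maxUnpaired_le_left.trans_lt (h.sub_gap z ▸ hlt))

lemma lt_two_mul_sub_gap (h : PairedSolution ι z c₀ a n) (hι : Function.Injective ι) :
    n z < 2 * (n z - gap ι a n z) := by
  have hpos : n z - gap ι a n z ≠ 0 := by
    rw [h.sub_gap]
    exact (two_pos.trans_le ((h.two_le_maxUnpaired hι).trans h.maxUnpaired_le_left)).ne'
  obtain ⟨p, hp, hlt, hle⟩ := Nat.exists_prime_lt_and_le_two_mul _ hpos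
  by_contra! hn
  exact h.not_prime hι hlt (hle.trans hn) hp

/-- Comparing the powers of `2` on both sides, as `v₂(m!)` equals `m` up to `O(log m)`. -/
lemma sum_unpaired_le (h : PairedSolution ι z c₀ a n) (hι : Function.Injective ι) :
    ∑ l ∈ unpaired ι, a l ≤ ∑ j, gap ι a n j + Fintype.card α * (Nat.log 2 (n z) + 1) := by
  have hleft : ∑ l, a l ≤
      ∑ l, (a l)!.factorization 2 + Fintype.card α * (Nat.log 2 (n z) + 1) := by
    rw [← Finset.card_univ, ← smul_eq_mul, ← Finset.sum_const, ← Finset.sum_add_distrib]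
    refine Finset.sum_le_sum fun l _ ↦ ?_
    have hlog := Nat.log_mono_right (b := 2)
      (((h.le_left l).trans (Nat.le_add_right _ 2)).trans h.add_two_le)
    have hv₂ := le_mul_factorization_factorial Nat.prime_two (a l)
    omega
  have hval : ∑ l, (a l)!.factorization 2 = ∑ j, ((n j)!).factorization 2 := by
    rw [← Nat.factorization_prod_apply fun l _ ↦ (a l).factorial_ne_zero, h.prod_eq,
      Nat.factorization_prod_apply fun j _ ↦ (n j).factorial_ne_zero]
  have hright : ∑ j, ((n j)!).factorization 2 ≤ ∑ j, n j :=
    Finset.sum_le_sum fun j _ ↦ by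
      simpa using Nat.factorization_factorial_le_div_pred Nat.prime_two (n j)
  have hgap : ∑ j, n j = ∑ j, gap ι a n j + ∑ j, a (ι j) := by
    rw [← Finset.sum_add_distrib]
    exact Finset.sum_congr rfl fun j _ ↦ (Nat.sub_add_cancel (h.lt j).le).symm
  have hsplit := sum_eq_sum_unpaired_add hι a
  omega

lemma sum_gap_le (h : PairedSolution ι z c₀ a n) :
    (∑ j, gap ι a n j : ℝ) ≤ Fintype.card β * c₀ * gap ι a n z := by
  have := Finset.sum_le_card_nsmul Finset.univ _ _ fun j _ ↦ h.gap_le j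
  rw [smul_eq_mul, ← mul_assoc] at this
  exact mod_cast this

lemma sum_unpaired_le_log (h : PairedSolution ι z c₀ a n) (hι : Function.Injective ι) :
    (∑ l ∈ unpaired ι, a l : ℝ) ≤ ∑ j, (gap ι a n j : ℝ) + 3 * Fintype.card α * log (n z) := by
  have hsum : (∑ l ∈ unpaired ι, a l : ℝ) ≤
      ∑ j, (gap ι a n j : ℝ) + Fintype.card α * (Nat.log 2 (n z) + 1) :=
    mod_cast h.sum_unpaired_le hι
  have hlog := natLog_two_add_one_le ((Nat.le_add_left 2 _).trans h.add_two_le)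
  nlinarith [(Fintype.card α).cast_nonneg (α := ℝ)]

lemma maxUnpaired_le (h : PairedSolution ι z c₀ a n) (hι : Function.Injective ι) :
    (maxUnpaired ι a : ℝ) ≤
      Fintype.card β * c₀ * gap ι a n z + 3 * Fintype.card α * log (n z) := by
  have hmax : (maxUnpaired ι a : ℝ) ≤ ∑ l ∈ unpaired ι, (a l : ℝ) :=
    mod_cast Finset.sup_le fun l hl ↦ Finset.single_le_sum (fun l _ ↦ (a l).zero_le) hl
  linarith [h.sum_unpaired_le_log hι, h.sum_gap_le]

lemma gap_mul_log_le (h : PairedSolution ι z c₀ a n) (hι : Function.Injective ι) :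
    gap ι a n z * log (n z) ≤
      2 * Fintype.card α * (maxUnpaired ι a * log (maxUnpaired ι a)) := by
  have hhalf : log (n z) / 2 ≤ log (n z + 1 - gap ι a n z : ℕ) := by
    have hbert := h.lt_two_mul_sub_gap hι
    have hgap := h.two_le_gap
    have hsq : n z ≤ (n z + 1 - gap ι a n z) ^ 2 :=
      calc n z ≤ 2 * (n z + 1 - gap ι a n z) := by omega
        _ ≤ (n z + 1 - gap ι a n z) ^ 2 := by
          rw [sq]
          exact Nat.mul_le_mul_right _ (by omega)
    have := log_le_log (Nat.cast_pos.mpr (by omega)) (Nat.cast_le (α := ℝ).mpr hsq)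
    rw [Nat.cast_pow, log_pow, Nat.cast_two] at this
    linarith
  have hlower : gap ι a n z * (log (n z) / 2) ≤ ∑ l ∈ unpaired ι, log (a l)! := by
    rw [h.sum_unpaired_log_factorial hι]
    exact (mul_le_mul_of_nonneg_left hhalf (Nat.cast_nonneg _)).trans
      ((mul_log_le_log_descFactorial (gap_le_self ι a n z)).trans
        (Finset.single_le_sum (fun j _ ↦ log_natCast_nonneg ((n j).descFactorial (gap ι a n j)))
          (Finset.mem_univ z)))
  have hupper := mul_le_mul_of_nonneg_right (sum_unpaired_le_card_mul (ι := ι) a)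
    (log_natCast_nonneg (maxUnpaired ι a))
  linarith [sum_unpaired_log_factorial_le (ι := ι) a]

lemma maxUnpaired_mul_log_sub_le (h : PairedSolution ι z c₀ a n) (hι : Function.Injective ι) :
    maxUnpaired ι a * log (maxUnpaired ι a) - maxUnpaired ι a ≤
      Fintype.card β * c₀ * (gap ι a n z * log (n z)) := by
  have hmax := h.two_le_maxUnpaired hι
  have hne : (unpaired ι).Nonempty := by
    rw [Finset.nonempty_iff_ne_empty]
    intro hempty
    simp [maxUnpaired, hempty] at hmax
  obtain ⟨l, hl, hla⟩ := Finset.exists_mem_eq_sup _ hne a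
  calc maxUnpaired ι a * log (maxUnpaired ι a) - maxUnpaired ι a
      ≤ log ((maxUnpaired ι a) !) :=
        mul_log_sub_le_log_factorial (Nat.cast_pos.mpr (two_pos.trans_le hmax)) _
    _ = log (a l)! := by rw [maxUnpaired, hla]
    _ ≤ ∑ l ∈ unpaired ι, log (a l)! :=
        Finset.single_le_sum (f := fun l ↦ log (a l)!) (fun l _ ↦ log_natCast_nonneg _) hl
    _ = ∑ j, log ((n j).descFactorial (gap ι a n j)) := h.sum_unpaired_log_factorial hι
    _ ≤ ∑ j, gap ι a n j * log (n z) :=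
        Finset.sum_le_sum fun j _ ↦ log_descFactorial_le (gap_le_self ι a n j) (h.le_right j)
    _ ≤ Fintype.card β * c₀ * gap ι a n z * log (n z) := by
        rw [← Finset.sum_mul]
        exact mul_le_mul_of_nonneg_right h.sum_gap_le (log_natCast_nonneg _)
    _ = Fintype.card β * c₀ * (gap ι a n z * log (n z)) := mul_assoc _ _ _

/-- The descending factorial paired with `z` contributes about `k log N`, the other ones at least
`d log k - k` each, where `k` and `d` are the respective gaps. -/
lemma add_sum_gap_mul_log_le (h : PairedSolution ι z c₀ a n) (hι : Function.Injective ι) :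
    gap ι a n z * (log (n z) - log (gap ι a n z)) +
        (∑ j, (gap ι a n j : ℝ)) * log (gap ι a n z) - Fintype.card β * gap ι a n z ≤
      ∑ l ∈ unpaired ι, log (a l)! := by
  classical
  set k := gap ι a n z
  have hk : (0 : ℝ) < k := Nat.cast_pos.mpr (two_pos.trans_le h.two_le_gap)
  have hterm (j : β) : (if j = z then k * (log (n z) - log k) else 0) +
      (gap ι a n j * log k - k) ≤ log ((n j).descFactorial (gap ι a n j)) := by
    split_ifs with hj
    · subst hj
      linarith [mul_log_half_le_log_descFactorial (h.lt_two_mul_sub_gap hι)]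
    · rw [zero_add]
      exact (mul_log_sub_le_log_factorial hk _).trans
        (log_factorial_le_log_descFactorial (gap_le_self ι a n j))
  have hsum := Finset.sum_le_sum fun j (_ : j ∈ Finset.univ) ↦ hterm j
  rw [← h.sum_unpaired_log_factorial hι, Finset.sum_add_distrib, Finset.sum_ite_eq' Finset.univ z,
    if_pos (Finset.mem_univ z), Finset.sum_sub_distrib, ← Finset.sum_mul, Finset.sum_const,
    Finset.card_univ, nsmul_eq_mul] at hsum
  linarith

lemma gap_mul_log_sub_log_le (h : PairedSolution ι z c₀ a n) (hι : Function.Injective ι) :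
    gap ι a n z * (log (n z) - log (gap ι a n z)) ≤
      ((Fintype.card β * c₀) ^ 2 + Fintype.card β * c₀) * gap ι a n z +
        3 * (Fintype.card β * c₀) * Fintype.card α * log (n z) +
          3 * Fintype.card α * (log (n z) * log (maxUnpaired ι a)) := by
  set D : ℝ := Fintype.card β * c₀
  set t : ℝ := ↑(Fintype.card α)
  set k := gap ι a n z
  set L := log (n z)
  set M := maxUnpaired ι a
  set K := ∑ j, (gap ι a n j : ℝ)
  have hk : (0 : ℝ) < k := Nat.cast_pos.mpr (two_pos.trans_le h.two_le_gap)
  have hM : (0 : ℝ) < M := Nat.cast_pos.mpr (two_pos.trans_le (h.two_le_maxUnpaired hι))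
  have hK : K ≤ D * k := h.sum_gap_le
  have hupper : ∑ l ∈ unpaired ι, log (a l)! ≤ (K + 3 * t * L) * log M := by
    refine (sum_unpaired_log_factorial_le a).trans ?_
    exact mul_le_mul_of_nonneg_right (h.sum_unpaired_le_log hι) (log_natCast_nonneg M)
  have hcancel : K * (log M - log k) ≤ D * M := by
    calc K * (log M - log k) ≤ K * (M / k) := by
          rw [← log_div hM.ne' hk.ne']
          gcongr
          exact log_le_self (by positivity)
      _ ≤ D * k * (M / k) := by gcongr
      _ = D * M := by field_simp
  have hDM : D * M ≤ D * (D * k + 3 * t * L) := by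
    have : 0 ≤ D := by positivity
    gcongr
    exact h.maxUnpaired_le hι
  have hcard : Fintype.card β * (k : ℝ) ≤ D * k := by
    have hc₀ : (1 : ℝ) ≤ c₀ := mod_cast
      Nat.pos_of_mul_pos_right (two_pos.trans_le (h.two_le_gap.trans (h.gap_le z)))
    gcongr
    exact le_mul_of_one_le_right (Nat.cast_nonneg _) hc₀
  linarith [h.add_sum_gap_mul_log_le hι]

theorem gapEstimates (h : PairedSolution ι z c₀ a n) (hι : Function.Injective ι)
    (habc : ExplicitABC) :
    GapEstimates (2 * (Fintype.card β * c₀ + Fintype.card α + 4) ^ 2) (n z) (gap ι a n z)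
      (maxUnpaired ι a) := by
  have hmax := h.maxUnpaired_le hι
  have hgap := h.gap_mul_log_le hι
  have hmaxlog := h.maxUnpaired_mul_log_sub_le hι
  have hgaplog := h.gap_mul_log_sub_log_le hι
  have habclog := habc.log_le_of_primeFactors_le h.two_le_gap (h.lt_two_mul_sub_gap hι)
    fun x hx p hp ↦ h.le_maxUnpaired_of_mem_primeFactors hι hx hp
  set D : ℝ := Fintype.card β * c₀
  set t : ℝ := ↑(Fintype.card α)
  have hD : 0 ≤ D := by positivity
  have ht : 0 ≤ t := by positivity
  have hDt := mul_nonneg hD ht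
  refine ⟨h.two_le_gap, h.two_le_maxUnpaired hι, hmax.trans ?_, hgap.trans ?_, hmaxlog.trans ?_,
    habclog.trans ?_, hgaplog.trans ?_, fun p ↦ h.not_prime hι⟩
  · rw [mul_add]
    gcongr ?_ * _ + ?_ * _ <;> nlinarith
  · gcongr
    nlinarith
  · gcongr
    nlinarith
  · gcongr
    nlinarith
  · rw [mul_add, mul_add]
    gcongr ?_ * _ + ?_ * _ + ?_ * _ <;> nlinarith

end PairedSolution

theorem finitely_many_solutions_general_s_general (habc : ExplicitABC) {α β : Type*} [Fintype α]
    [Fintype β] {ι : β → α} (hι : Function.Injective ι) (z : β) (c₀ : ℕ) :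
    {p : (α → ℕ) × (β → ℕ) | PairedSolution ι z c₀ p.1 p.2}.Finite := by
  obtain ⟨N, hN⟩ := GapEstimates.bddAbove_setOf
    (C := 2 * (Fintype.card β * c₀ + Fintype.card α + 4) ^ 2)
    (by nlinarith [show (0 : ℝ) ≤ Fintype.card β * c₀ + Fintype.card α by positivity])
  refine ((Set.Finite.pi' fun _ ↦ Set.finite_Iic N).prod
    (Set.Finite.pi' fun _ ↦ Set.finite_Iic N)).subset fun p h ↦ ?_
  have hz : p.2 z ≤ N := hN ⟨_, _, h.gapEstimates hι habc⟩
  exact ⟨fun l ↦ ((h.le_left l).trans (h.lt z).le).trans hz, fun j ↦ (h.le_right j).trans hz⟩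

/-- Under the explicit abc conjecture, for fixed `2 ≤ s < t`, distinct indices
`i₂, …, i_s ∈ {2, …, t}` (encoded by an injective `ι : Fin s → Fin t` with `ι 0 = 0`,
so that `n₁` is paired with `a₁` and `n_j` with `a_{i_j}` for `j ≥ 2`) and `c₀ ≥ 1`,
the equation `∏ a_l ! = ∏ n_j !` has only finitely many nontrivial solutions with
`a₁ ≥ ⋯ ≥ a_t ≥ 2`, `n₁ ≥ ⋯ ≥ n_s ≥ 2`, `|a_l - n_j| ≥ 2` for all `l, j`,
`n₁ > a₁`, `n_j > a_{i_j}` and `max_j (n_j - a_{i_j}) ≤ c₀ (n₁ - a₁)`. -/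
theorem finitely_many_solutions_general_s
    (habc : ExplicitABC) (t s : ℕ) (hs : 2 ≤ s) (hst : s < t)
    (ι : Fin s → Fin t) (hinj : Function.Injective ι)
    (hι0 : (ι ⟨0, by omega⟩).val = 0)
    (c₀ : ℕ) (hc₀ : 0 < c₀) :
    {p : (Fin t → ℕ) × (Fin s → ℕ) |
      (∀ l l' : Fin t, l ≤ l' → p.1 l' ≤ p.1 l) ∧
      (∀ l : Fin t, 2 ≤ p.1 l) ∧
      (∀ j j' : Fin s, j ≤ j' → p.2 j' ≤ p.2 j) ∧
      (∀ j : Fin s, 2 ≤ p.2 j) ∧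
      (∏ l : Fin t, Nat.factorial (p.1 l)) = (∏ j : Fin s, Nat.factorial (p.2 j)) ∧
      (∀ l : Fin t, ∀ j : Fin s, 2 ≤ |(p.1 l : ℤ) - (p.2 j : ℤ)|) ∧
      (∀ j : Fin s, p.1 (ι j) < p.2 j) ∧
      (∀ j : Fin s, 1 ≤ j.val →
        p.2 j - p.1 (ι j) ≤
          c₀ * (p.2 ⟨0, by omega⟩ - p.1 (ι ⟨0, by omega⟩)))}.Finite := by
  refine (finitely_many_solutions_general_s_general habc hinj ⟨0, by omega⟩ c₀).subset ?_
  rintro ⟨a, n⟩ ⟨ha, -, hn, -, hprod, habs, hlt, hgap⟩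
  refine ⟨fun l ↦ ha _ _ ?_, fun j ↦ hn _ _ (Nat.zero_le _), hprod, ?_, hlt, fun j ↦ ?_⟩
  · rw [Fin.le_def, hι0]
    exact Nat.zero_le _
  · have hlt₀ := hlt ⟨0, by omega⟩
    have habs₀ := habs (ι ⟨0, by omega⟩) ⟨0, by omega⟩
    rw [abs_sub_comm, abs_of_nonneg (by omega)] at habs₀
    omega
  · rcases Nat.eq_zero_or_pos j.val with hj | hj
    · rw [show j = ⟨0, by omega⟩ from Fin.ext hj]
      exact Nat.le_mul_of_pos_left _ hc₀
    · exact hgap j hj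
end

section
/- Let t ≥ 2 and s ≥ 1 be integers, and suppose positive integers a₁ ≥ a₂ ≥ ⋯ ≥ a_t ≥ 2 and n₁ ≥ n₂ ≥ ⋯ ≥ n_s ≥ 2 satisfy ∏_{l=1}^{t} a_l! = ∏_{j=1}^{s} n_j! and n₁ > a₁. Then m₁ ≥ k₁, where m₁ = a₁ + 1 and k₁ = n₁ − a₁; equivalently, n₁ ≤ 2a₁ + 1. -/
section

open scoped Nat

variable {ι : Type*} {s : Finset ι} {a : ι → ℕ} {A N p : ℕ}

theorem prime_dvd_prod_factorial_iff (hp : p.Prime) :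
    p ∣ ∏ i ∈ s, (a i)! ↔ ∃ i ∈ s, p ≤ a i := by
  simp only [hp.prime.dvd_finsetProd_iff, hp.dvd_factorial]

theorem prime_le_of_factorial_dvd_prod_factorial (ha : ∀ i ∈ s, a i ≤ A)
    (hdvd : N ! ∣ ∏ i ∈ s, (a i)!) (hp : p.Prime) (hpN : p ≤ N) : p ≤ A := by
  have hp_dvd : p ∣ ∏ i ∈ s, (a i)! := (hp.dvd_factorial.mpr hpN).trans hdvd
  obtain ⟨i, hi, hpi⟩ := (prime_dvd_prod_factorial_iff hp).mp hp_dvd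
  exact hpi.trans (ha i hi)

theorem lt_two_mul_of_forall_prime_le (hA : A ≠ 0)
    (hprime : ∀ p : ℕ, p.Prime → p ≤ N → p ≤ A) : N < 2 * A := by
  obtain ⟨p, hp, hAp, hp2A⟩ := Nat.exists_prime_lt_and_le_two_mul A hA
  have hNp : N < p := not_le.mp fun hpN => hAp.not_ge (hprime p hp hpN)
  exact hNp.trans_le hp2A

theorem m1_ge_k1_general (hA : A ≠ 0) (ha : ∀ i ∈ s, a i ≤ A)
    (hdvd : N ! ∣ ∏ i ∈ s, (a i)!) : N < 2 * A :=
  lt_two_mul_of_forall_prime_le hA fun _ => prime_le_of_factorial_dvd_prod_factorial ha hdvd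

end

/-- If `a₁ ≥ ⋯ ≥ a_t ≥ 2` and `n₁ ≥ ⋯ ≥ n_s ≥ 2` satisfy `∏ a_l ! = ∏ n_j !` and
`n₁ > a₁`, then `m₁ ≥ k₁` where `m₁ = a₁ + 1` and `k₁ = n₁ - a₁`; equivalently
`n₁ ≤ 2 a₁ + 1`. -/
theorem m1_ge_k1
    (t s : ℕ) (ht : 2 ≤ t) (hs : 1 ≤ s)
    (a : Fin t → ℕ) (n : Fin s → ℕ)
    (ha : ∀ l l' : Fin t, l ≤ l' → a l' ≤ a l) (ha2 : ∀ l, 2 ≤ a l)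
    (hn : ∀ j j' : Fin s, j ≤ j' → n j' ≤ n j) (hn2 : ∀ j, 2 ≤ n j)
    (heq : ∏ l : Fin t, Nat.factorial (a l) = ∏ j : Fin s, Nat.factorial (n j))
    (h1 : a ⟨0, by omega⟩ < n ⟨0, by omega⟩) :
    n ⟨0, by omega⟩ - a ⟨0, by omega⟩ ≤ a ⟨0, by omega⟩ + 1 := by
  have hdvd : (n ⟨0, by omega⟩).factorial ∣ ∏ l : Fin t, (a l).factorial :=
    heq ▸ Finset.dvd_prod_of_mem (fun j => (n j).factorial) (Finset.mem_univ _)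
  have hlt := m1_ge_k1_general (Nat.ne_zero_of_lt (ha2 ⟨0, by omega⟩))
    (fun l _ => ha ⟨0, by omega⟩ l (Nat.zero_le _)) hdvd
  omega
end

section
/- Let 2 ≤ s < t be integers, let i₂,…,i_s ∈ {2,…,t} be distinct indices, and suppose positive integers a₁ ≥ a₂ ≥ ⋯ ≥ a_t ≥ 2 and n₁ ≥ n₂ ≥ ⋯ ≥ n_s ≥ 2 satisfy ∏_{l=1}^{t} a_l! = ∏_{j=1}^{s} n_j!, n₁ > a₁, and n_j > a_{i_j} for each j = 2,…,s. Set m₁ = a₁ + 1, k₁ = n₁ − a₁, k_j = n_j − a_{i_j} for j = 2,…,s, and a = max{a_l : l ∉ {1, i₂, …, i_s}}. Then a·log a − a ≤ log(a!) ≤ (k₁ + k₂ + ⋯ + k_s)·log(2m₁). -/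
/-!
Cancelling `(a (f j))!` against `(n j)!` for every `j` leaves the product of the unmatched
factorials on one side and a product of `∑ j, (n j - a (f j))` integers, each at most `max n`, on
the other. If `M` bounds all the `a l`, Bertrand's postulate gives a prime `p` with `M < p ≤ 2 * M`.
This `p` divides no `(a l)!`, hence no `(n j)!`, so every `n j` is less than `2 * M`.
-/

open Finset
open scoped Nat

theorem mul_log_sub_self_le_log_factorial (n : ℕ) : n * Real.log n - n ≤ Real.log n ! := by
  rcases eq_or_ne n 0 with rfl | hn
  · simp
  have hpow : (0 : ℝ) < n ^ n := by positivity
  have hfact : (0 : ℝ) < n ! := by positivity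
  have hexp : Real.log (n ^ n / n !) ≤ n :=
    (Real.log_le_iff_le_exp (div_pos hpow hfact)).2
      (Real.pow_div_factorial_le_exp n n.cast_nonneg n)
  rw [Real.log_div hpow.ne' hfact.ne', Real.log_pow] at hexp
  linarith

theorem factorial_le_factorial_mul_pow_sub {m n : ℕ} (h : m ≤ n) : n ! ≤ m ! * n ^ (n - m) :=
  calc
    n ! = m ! * n.descFactorial (n - m) := by
      rw [← Nat.factorial_mul_descFactorial (n.sub_le m), Nat.sub_sub_self h]
    _ ≤ m ! * n ^ (n - m) := Nat.mul_le_mul_left _ (n.descFactorial_le_pow _)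

section

variable {α β : Type*}

theorem factorial_sup_le_prod_factorial (s : Finset α) (a : α → ℕ) :
    (s.sup a)! ≤ ∏ i ∈ s, (a i)! := by
  rcases s.eq_empty_or_nonempty with rfl | hs
  · simp
  obtain ⟨i, hi, hsup⟩ := exists_mem_eq_sup s hs a
  rw [hsup]
  exact single_le_prod' (f := fun i ↦ (a i)!) (fun i _ ↦ (a i).factorial_pos) hi

theorem lt_two_mul_of_factorial_dvd_prod_factorial {s : Finset α} {a : α → ℕ} {n M : ℕ}
    (hM : M ≠ 0) (ha : ∀ i ∈ s, a i ≤ M) (hdvd : n ! ∣ ∏ i ∈ s, (a i)!) : n < 2 * M := by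
  obtain ⟨p, hp, hMp, hpM⟩ := Nat.exists_prime_lt_and_le_two_mul M hM
  by_contra! hn
  have hpn : p ∣ n ! := hp.dvd_factorial.2 (hpM.trans hn)
  obtain ⟨i, hi, hpi⟩ := (hp.prime.dvd_finsetProd_iff _).1 (hpn.trans hdvd)
  exact (hp.dvd_factorial.1 hpi).not_gt ((ha i hi).trans_lt hMp)

variable [Fintype α] [DecidableEq α] [Fintype β] {f : β → α} {a : α → ℕ} {n : β → ℕ}

theorem prod_factorial_compl_image_le_pow {N : ℕ} (hf : f.Injective)
    (hprod : ∏ l, (a l)! ≤ ∏ j, (n j)!) (hle : ∀ j, a (f j) ≤ n j) (hN : ∀ j, n j ≤ N) :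
    ∏ l ∈ (univ.image f)ᶜ, (a l)! ≤ N ^ ∑ j, (n j - a (f j)) := by
  have hpos : 0 < ∏ j, (a (f j))! := prod_pos fun j _ ↦ (a (f j)).factorial_pos
  refine Nat.le_of_mul_le_mul_left ?_ hpos
  calc
    (∏ j, (a (f j))!) * ∏ l ∈ (univ.image f)ᶜ, (a l)! = ∏ l, (a l)! := by
      rw [← prod_mul_prod_compl (univ.image f), prod_image hf.injOn]
    _ ≤ ∏ j, (n j)! := hprod
    _ ≤ ∏ j, (a (f j))! * N ^ (n j - a (f j)) := prod_le_prod' fun j _ ↦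
      (factorial_le_factorial_mul_pow_sub (hle j)).trans (by gcongr; exact hN j)
    _ = (∏ j, (a (f j))!) * N ^ ∑ j, (n j - a (f j)) := by
      rw [prod_mul_distrib, prod_pow_eq_pow_sum]

theorem log_factorial_bounds_general_s_general {M A : ℕ} (hf : f.Injective)
    (heq : ∏ l, (a l)! = ∏ j, (n j)!) (hle : ∀ j, a (f j) ≤ n j)
    (hM : M ≠ 0) (ha : ∀ l, a l ≤ M) (hA : A = (univ.image f)ᶜ.sup a) :
    A * Real.log A - A ≤ Real.log A ! ∧
      Real.log A ! ≤ (∑ j, (n j - a (f j)) : ℕ) * Real.log (2 * M) := by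
  refine ⟨mul_log_sub_self_le_log_factorial A, ?_⟩
  have hn (j : β) : n j ≤ 2 * M :=
    (lt_two_mul_of_factorial_dvd_prod_factorial hM (fun l _ ↦ ha l)
      (heq ▸ dvd_prod_of_mem (fun j ↦ (n j)!) (mem_univ j))).le
  have hfact : A ! ≤ (2 * M) ^ ∑ j, (n j - a (f j)) := by
    rw [hA]
    exact (factorial_sup_le_prod_factorial _ a).trans
      (prod_factorial_compl_image_le_pow hf heq.le hle hn)
  rw [← Real.log_pow]
  exact Real.log_le_log (by positivity) (by exact_mod_cast hfact)

end

/-- Lemma 2.3(ii): let `2 ≤ s < t`, let `i₂, …, i_s ∈ {2, …, t}` be distinct indices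
(encoded by an injective `ι : Fin s → Fin t` with `ι 0 = 0`, so `n₁` is paired with
`a₁` and `n_j` with `a_{i_j}` for `j ≥ 2`), and suppose `a₁ ≥ ⋯ ≥ a_t ≥ 2` and
`n₁ ≥ ⋯ ≥ n_s ≥ 2` satisfy `∏ a_l ! = ∏ n_j !`, with `n_j > a_{i_j}` for all `j`.
Then with `m₁ = a₁ + 1`, `k_j = n_j - a_{i_j}` and `A = max {a_l : l ∉ {1, i₂, …, i_s}}`
one has `A log A - A ≤ log (A!) ≤ (k₁ + ⋯ + k_s) log (2 m₁)`. -/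
theorem log_factorial_bounds_general_s
    (t s : ℕ) (hs : 2 ≤ s) (hst : s < t)
    (ι : Fin s → Fin t) (hinj : Function.Injective ι)
    (hι0 : (ι ⟨0, by omega⟩).val = 0)
    (a : Fin t → ℕ) (n : Fin s → ℕ)
    (ha : ∀ l l' : Fin t, l ≤ l' → a l' ≤ a l) (ha2 : ∀ l, 2 ≤ a l)
    (hn : ∀ j j' : Fin s, j ≤ j' → n j' ≤ n j) (hn2 : ∀ j, 2 ≤ n j)
    (heq : ∏ l : Fin t, Nat.factorial (a l) = ∏ j : Fin s, Nat.factorial (n j))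
    (hgt : ∀ j : Fin s, a (ι j) < n j)
    (A : ℕ) (hA : A = (Finset.univ.filter (fun l : Fin t => ∀ j : Fin s, ι j ≠ l)).sup a) :
    (A : ℝ) * Real.log A - A ≤ Real.log (Nat.factorial A) ∧
    Real.log (Nat.factorial A) ≤
      ((∑ j : Fin s, (n j - a (ι j)) : ℕ) : ℝ) *
        Real.log (2 * (a ⟨0, by omega⟩ + 1)) := by
  have ha1 (l : Fin t) : a l ≤ a ⟨0, by omega⟩ + 1 := Nat.le_succ_of_le (ha _ l (Nat.zero_le _))
  have hcompl : ({l | ∀ j, ι j ≠ l} : Finset (Fin t)) = (univ.image ι)ᶜ := by ext l; simp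
  simpa using log_factorial_bounds_general_s_general hinj heq (fun j ↦ (hgt j).le)
    (Nat.succ_ne_zero _) ha1 (hcompl ▸ hA)
end
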